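/- arXiv:2108.04765 — 2 statements merged into one kernel-verified Lean document; each statement's English description precedes it below -/
import Mathlib

section
/- (Conversion to higher-order divergence form.) Let 𝒮 ⊂ Λ be a lattice basis, let p, q ∈ ℕ with q + 1 − p > d, let α ∈ ℝ, and let f⁽⁰⁾ : Λ → ℝ^N satisfy |f⁽⁰⁾(ℓ)| ≤ C_f⟨ℓ⟩^{−q}(log⟨ℓ⟩)^α for all ℓ ∈ Λ, with vanishing moments ∑_{ℓ∈Λ} f⁽⁰⁾(ℓ) ⊗ ℓ^{⊗j} = 0 for j = 0,…,p−1 (these sums converge absolutely). Then there exist tensor fields f⁽ᵏ⁾ : Λ → ℝ^N ⊗ (ℝ^𝒮)^{⊗k} for 1 ≤ k ≤ p and a constant C independent of f⁽⁰⁾ such that for each 1 ≤ k ≤ p: (sym f⁽ᵏ⁻¹⁾)(ℓ) = ∑_{σ∈𝒮} (f⁽ᵏ⁾_{·,σ}(ℓ−σ) − f⁽ᵏ⁾_{·,σ}(ℓ)) for all ℓ ∈ Λ, where f⁽ᵏ⁾_{·,σ} denotes the slice of f⁽ᵏ⁾ with last 𝒮-index equal to σ, and |f⁽ᵏ⁾(ℓ)|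 ≤ C·C_f⟨ℓ⟩^{−q+k}(log⟨ℓ⟩)^α for all ℓ ∈ Λ. -/
noncomputable section

open scoped BigOperators
open MeasureTheory Filter Topology

namespace Defect

abbrev Vec (n : ℕ) : Type := Fin n → ℝ

/-- Euclidean norm of a vector in `ℝ^n`. -/
def enorm {n : ℕ} (v : Vec n) : ℝ := Real.sqrt (∑ i, (v i) ^ 2)

/-- `⟨x⟩ := |x| + 2`. -/
def ang {n : ℕ} (v : Vec n) : ℝ := enorm v + 2

def dotV {n : ℕ} (x y : Vec n) : ℝ := ∑ i, x i * y i

/-- Matrix-vector product for a plain `Fin N → Fin N → ℝ` matrix. -/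
def mulV {N : ℕ} (M : Fin N → Fin N → ℝ) (v : Vec N) : Vec N := fun i => ∑ j, M i j * v j

/-- Euclidean (Frobenius) norm of an `N × N` array. -/
def mnorm {N : ℕ} (M : Fin N → Fin N → ℝ) : ℝ := Real.sqrt (∑ i, ∑ j, (M i j) ^ 2)

/-- The lattice point `A z` for `z ∈ ℤ^d`. -/
def latticePt (d : ℕ) (A : Matrix (Fin d) (Fin d) ℝ) (z : Fin d → ℤ) : Vec d :=
  fun i => ∑ j, A i j * (z j : ℝ)

/-- The Bravais lattice `Λ = A ℤ^d`. -/
def Lattice (d : ℕ) (A : Matrix (Fin d) (Fin d) ℝ) : Set (Vec d) :=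
  Set.range (latticePt d A)

/-- First-order finite difference `D_ρ u (ℓ) = u(ℓ+ρ) - u(ℓ)`. -/
def D1 {d : ℕ} {M : Type} [AddCommGroup M] (ρ : Vec d) (u : Vec d → M) (ℓ : Vec d) : M :=
  u (ℓ + ρ) - u ℓ

/-- Iterated finite difference `D_{ρ₁} ⋯ D_{ρ_j} u (ℓ)` (closed form). -/
def Dmulti {d : ℕ} {M : Type} [AddCommGroup M] [Module ℝ M] {j : ℕ}
    (ρs : Fin j → Vec d) (u : Vec d → M) (ℓ : Vec d) : M :=
  ∑ S : Finset (Fin j), ((-1 : ℝ) ^ (j - S.card)) • u (ℓ + ∑ i ∈ S, ρs i)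

/-- `|Du(ℓ)|²`, the squared Euclidean norm of the stencil of first differences. -/
def Dnorm1Sq {d N : ℕ} (R : Finset (Vec d)) (u : Vec d → Vec N) (ℓ : Vec d) : ℝ :=
  ∑ ρ ∈ R, (enorm (D1 ρ u ℓ)) ^ 2

/-- `|D^j u(ℓ)|`, the Euclidean norm of the array `(D_{ρ⃗} u(ℓ))_{ρ⃗ ∈ R^j}`. -/
def DnormJ {d N : ℕ} (R : Finset (Vec d)) (j : ℕ) (u : Vec d → Vec N) (ℓ : Vec d) : ℝ :=
  Real.sqrt (∑ ρs : Fin j → {x // x ∈ R},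
    (enorm (Dmulti (fun i => (ρs i : Vec d)) u ℓ)) ^ 2)

/-- The linearized lattice operator
`H[u](ℓ) = ∑_{σ,ρ∈R} (C_{σρ} D_ρ u(ℓ-σ) - C_{σρ} D_ρ u(ℓ))`. -/
def Hop (d N : ℕ) (R : Finset (Vec d)) (C : Vec d → Vec d → Fin N → Fin N → ℝ)
    (u : Vec d → Vec N) (ℓ : Vec d) : Vec N :=
  ∑ σ ∈ R, ∑ ρ ∈ R, (mulV (C σ ρ) (D1 ρ u (ℓ - σ)) - mulV (C σ ρ) (D1 ρ u ℓ))

/-- `u ∈ 𝓗¹`. -/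
def InH1 {d N : ℕ} (A : Matrix (Fin d) (Fin d) ℝ) (R : Finset (Vec d))
    (u : Vec d → Vec N) : Prop :=
  Summable fun z : Fin d → ℤ => Dnorm1Sq R u (latticePt d A z)

/-- `u ∈ 𝓗ᶜ` : the stencil `Du` has bounded support on the lattice. -/
def InHc {d N : ℕ} (A : Matrix (Fin d) (Fin d) ℝ) (R : Finset (Vec d))
    (u : Vec d → Vec N) : Prop :=
  ∃ rad : ℝ, ∀ z : Fin d → ℤ, rad ≤ enorm (latticePt d A z) →
    ∀ ρ ∈ R, D1 ρ u (latticePt d A z) = 0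

/-- Stability of the lattice operator `H`. -/
def IsStable (d N : ℕ) (A : Matrix (Fin d) (Fin d) ℝ) (R : Finset (Vec d))
    (C : Vec d → Vec d → Fin N → Fin N → ℝ) : Prop :=
  ∃ c₀ : ℝ, 0 < c₀ ∧ ∀ u : Vec d → Vec N, InHc A R u →
    c₀ * (∑' z : Fin d → ℤ, Dnorm1Sq R u (latticePt d A z)) ≤
      ∑' z : Fin d → ℤ, ∑ σ ∈ R, ∑ ρ ∈ R,
        dotV (D1 σ u (latticePt d A z)) (mulV (C σ ρ) (D1 ρ u (latticePt d A z)))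

/-- `k`-th column of a matrix-valued function. -/
def col {d N : ℕ} (G : Vec d → Fin N → Fin N → ℝ) (k : Fin N) : Vec d → Vec N :=
  fun x i => G x i k

/-- `|D^j 𝒢(ℓ)|` for matrix-valued `𝒢`. -/
def DnormJmat {d N : ℕ} (R : Finset (Vec d)) (j : ℕ)
    (G : Vec d → Fin N → Fin N → ℝ) (ℓ : Vec d) : ℝ :=
  Real.sqrt (∑ k : Fin N, (DnormJ R j (col G k) ℓ) ^ 2)

/-- `𝒢` is a lattice Green's function for `H`. -/
def IsLatticeGreen (d N : ℕ) (A : Matrix (Fin d) (Fin d) ℝ) (R : Finset (Vec d))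
    (C : Vec d → Vec d → Fin N → Fin N → ℝ) (G : Vec d → Fin N → Fin N → ℝ) : Prop :=
  (∀ (k : Fin N) (z : Fin d → ℤ),
      Hop d N R C (col G k) (latticePt d A z) =
        if latticePt d A z = 0 then Pi.single k 1 else 0) ∧
  (∀ j : ℕ, 1 ≤ j → ∃ cj : ℝ, ∀ z : Fin d → ℤ,
      DnormJmat R j G (latticePt d A z) ≤
        cj * ang (latticePt d A z) ^ ((2 : ℝ) - d - j))

/-- A symmetric array `b ∈ (ℝ^{Fin d})^{⊙ i}`. -/
def SymArr {d i : ℕ} (b : (Fin i → Fin d) → ℝ) : Prop :=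
  ∀ (π : Equiv.Perm (Fin i)) (σv : Fin i → Fin d), b (σv ∘ π) = b σv

/-- `b : D_𝒮^i f`, a multipole term built from the basis `s`. -/
def multipole (d N : ℕ) (s : Fin d → Vec d) (i : ℕ) (b : (Fin i → Fin d) → ℝ)
    (f : Vec d → Vec N) : Vec d → Vec N :=
  fun ℓ => ∑ σv : Fin i → Fin d, b σv • Dmulti (fun m => s (σv m)) f ℓ

/-- Iterated partial derivative `∂_{j₁} ⋯ ∂_{j_i} f (x)`. -/
def pderivMulti {d : ℕ} (i : ℕ) (js : Fin i → Fin d) (f : Vec d → ℝ) (x : Vec d) : ℝ :=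
  iteratedFDeriv ℝ i f x (fun m => Pi.single (js m) (1 : ℝ))

/-- `a : ∇^i f (x)` for a tensor `a ∈ (ℝ^d)^{⊗ i}`. -/
def aContract {d : ℕ} (i : ℕ) (a : (Fin i → Fin d) → ℝ) (f : Vec d → ℝ) (x : Vec d) : ℝ :=
  ∑ js : Fin i → Fin d, a js * pderivMulti i js f x

/-- Elementary tensor `σ⃗^⊗` as an array. -/
def tensorPow {d k : ℕ} (σs : Fin k → Vec d) : (Fin k → Fin d) → ℝ :=
  fun js => ∏ m, σs m (js m)

/-- Symmetric tensor product `σ⃗^⊙`. -/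
def symTensor {d k : ℕ} (σs : Fin k → Vec d) : (Fin k → Fin d) → ℝ :=
  fun js => ((k.factorial : ℝ))⁻¹ * ∑ π : Equiv.Perm (Fin k), tensorPow (σs ∘ π) js

/-- A symmetric tensor (array invariant under index permutations). -/
def SymTensor {d k : ℕ} (T : (Fin k → Fin d) → ℝ) : Prop :=
  ∀ (π : Equiv.Perm (Fin k)) (js : Fin k → Fin d), T (js ∘ π) = T js

/-- `∂V/∂g_ρ (gs)` as a vector in `ℝ^N`. -/
def gradV {d N : ℕ} (R : Finset (Vec d)) (V : ({x // x ∈ R} → Vec N) → ℝ)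
    (ρ : {x // x ∈ R}) (gs : {x // x ∈ R} → Vec N) : Vec N :=
  fun i => fderiv ℝ V gs (Pi.single ρ (Pi.single i 1))

/-- The finite-difference stencil `Du(ℓ) = (D_ρ u(ℓ))_{ρ ∈ R}`. -/
def Dstencil {d N : ℕ} (R : Finset (Vec d)) (u : Vec d → Vec N) (ℓ : Vec d) :
    {x // x ∈ R} → Vec N :=
  fun ρ => D1 (ρ : Vec d) u ℓ

/-- `C_{σρ} = ∂²V/∂g_σ ∂g_ρ (0)`. -/
def CofV {d N : ℕ} (R : Finset (Vec d)) (V : ({x // x ∈ R} → Vec N) → ℝ)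
    (σ ρ : Vec d) (i j : Fin N) : ℝ :=
  if hσ : σ ∈ R then
    if hρ : ρ ∈ R then
      iteratedFDeriv ℝ 2 V 0
        ![Pi.single ⟨σ, hσ⟩ (Pi.single i 1), Pi.single ⟨ρ, hρ⟩ (Pi.single j 1)]
    else 0
  else 0

/-- Summand of the first variation `δE(u)[v]` at a site. -/
def deltaEsite {d N : ℕ} (R : Finset (Vec d)) (V : ({x // x ∈ R} → Vec N) → ℝ)
    (u v : Vec d → Vec N) (ℓ : Vec d) : ℝ :=
  ∑ ρ ∈ R.attach, dotV (gradV R V ρ (Dstencil R u ℓ)) (D1 (ρ : Vec d) v ℓ)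

/-- The pointwise atomistic force `δE(u)(ℓ)`. -/
def deltaEpt {d N : ℕ} (R : Finset (Vec d)) (V : ({x // x ∈ R} → Vec N) → ℝ)
    (u : Vec d → Vec N) (ℓ : Vec d) : Vec N :=
  ∑ ρ ∈ R.attach,
    (gradV R V ρ (Dstencil R u (ℓ - (ρ : Vec d))) - gradV R V ρ (Dstencil R u ℓ))

/-- Point symmetry of the site potential. -/
def PointSym {d N : ℕ} (R : Finset (Vec d)) (hRsym : ∀ ρ ∈ R, -ρ ∈ R)
    (V : ({x // x ∈ R} → Vec N) → ℝ) : Prop :=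
  ∀ gs : {x // x ∈ R} → Vec N,
    V (fun ρ => -(gs ⟨-(ρ : Vec d), hRsym _ ρ.2⟩)) = V gs

/-- The Cauchy–Born elasticity tensor `ℂ_{iajb}`. -/
def CB {d N : ℕ} (A : Matrix (Fin d) (Fin d) ℝ) (R : Finset (Vec d))
    (C : Vec d → Vec d → Fin N → Fin N → ℝ)
    (i : Fin N) (a : Fin d) (j : Fin N) (b : Fin d) : ℝ :=
  (|A.det|)⁻¹ * ∑ ρ ∈ R, ∑ σ ∈ R, C ρ σ i j * ρ a * σ b

/-! Mass is transported inward to the origin by a reversed Pólya-urn walk: at `z` the walk steps in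
direction `i` with probability proportional to `|z i|`. Its throughput decays one order slower than
the transported field and solves the divergence equation everywhere except at the origin, where all
the mass ends up; if the total mass vanishes, the equation holds there too. Iterating on the
symmetrized potential works `p` times because summation by parts against the Newton polynomials,
whose differences are again Newton polynomials, turns the vanishing moments of one potential into
those of the next. -/

section LogWeights

variable {m α x y : ℝ}

/-- The weight `x ^ m (log x) ^ α` against which decay is measured. -/
def powLog (m α x : ℝ) : ℝ := x ^ m * Real.log x ^ α

lemma powLog_pos (m α : ℝ) (hx : 1 < x) : 0 < powLog m α x :=
  mul_pos (Real.rpow_pos_of_pos (by linarith) _) (Real.rpow_pos_of_pos (Real.log_pos hx) _)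

lemma rpow_mul_powLog (t m α : ℝ) (hx : 0 < x) : x ^ t * powLog m α x = powLog (t + m) α x := by
  rw [powLog, powLog, Real.rpow_add hx, mul_assoc]

lemma exists_log_rpow_le_mul (α : ℝ) {ε : ℝ} (hε : 0 < ε) :
    ∃ C > 0, ∀ x y : ℝ, 2 ≤ x → x ≤ y →
      Real.log y ^ α ≤ C * (y / x) ^ ε * Real.log x ^ α := by
  have log_pos {x : ℝ} (hx : 2 ≤ x) : 0 < Real.log x := Real.log_pos (by linarith)
  rcases le_or_gt α 0 with hα | hα
  · refine ⟨1, one_pos, fun x y hx hxy => ?_⟩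
    have hlog : Real.log y ^ α ≤ Real.log x ^ α :=
      Real.rpow_le_rpow_of_nonpos (log_pos hx) (Real.log_le_log (by linarith) hxy) hα
    have hratio : 1 ≤ (y / x) ^ ε :=
      Real.one_le_rpow ((one_le_div (by linarith)).2 hxy) hε.le
    rw [one_mul]
    exact hlog.trans (le_mul_of_one_le_left (Real.rpow_pos_of_pos (log_pos hx) α).le hratio)
  · set δ := ε / α with hδ
    have hδ_pos : 0 < δ := div_pos hε hα
    have hlog2 : 0 < Real.log 2 := log_pos le_rfl
    refine ⟨(1 + 1 / (δ * Real.log 2)) ^ α, by positivity, fun x y hx hxy => ?_⟩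
    have hx0 : 0 < x := by linarith
    have hratio : 1 ≤ y / x := (one_le_div hx0).2 hxy
    have hlog_x : Real.log 2 ≤ Real.log x := Real.log_le_log two_pos hx
    have hlog_ratio : Real.log (y / x) ≤ Real.log x * ((y / x) ^ δ / (δ * Real.log 2)) :=
      calc Real.log (y / x) ≤ (y / x) ^ δ / δ := Real.log_le_rpow_div (by positivity) hδ_pos
        _ = Real.log 2 * ((y / x) ^ δ / (δ * Real.log 2)) := by field_simp
        _ ≤ _ := by gcongr
    have hlog_y : Real.log y ≤ (1 + 1 / (δ * Real.log 2)) * (y / x) ^ δ * Real.log x :=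
      calc Real.log y = Real.log x + Real.log (y / x) := by
            rw [Real.log_div (by linarith) hx0.ne']; ring
        _ ≤ Real.log x * (y / x) ^ δ + Real.log x * ((y / x) ^ δ / (δ * Real.log 2)) :=
            add_le_add (le_mul_of_one_le_right (log_pos hx).le
              (Real.one_le_rpow hratio hδ_pos.le)) hlog_ratio
        _ = _ := by ring
    have hpow : ((y / x) ^ δ) ^ α = (y / x) ^ ε := by
      rw [← Real.rpow_mul (by positivity), hδ, div_mul_cancel₀ _ hα.ne']
    calc Real.log y ^ α ≤ ((1 + 1 / (δ * Real.log 2)) * (y / x) ^ δ * Real.log x) ^ α :=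
          Real.rpow_le_rpow (log_pos (hx.trans hxy)).le hlog_y hα.le
      _ = _ := by
          have := log_pos hx
          rw [Real.mul_rpow (by positivity) this.le, Real.mul_rpow (by positivity) (by positivity),
            hpow]

lemma rpow_le_mul_rpow_of_comparable (m : ℝ) {M : ℝ} (hx : 0 < x) (hy : 0 < y)
    (hxy : x ≤ M * y) (hyx : y ≤ M * x) : x ^ m ≤ M ^ |m| * y ^ m := by
  have hM : 0 < M := pos_of_mul_pos_left (hx.trans_le hxy) hy.le
  rcases le_total 0 m with hm | hm
  · rw [abs_of_nonneg hm, ← Real.mul_rpow hM.le hy.le]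
    exact Real.rpow_le_rpow hx.le hxy hm
  · rw [abs_of_nonpos hm, Real.rpow_neg hM.le, ← div_eq_inv_mul, ← Real.div_rpow hy.le hM.le]
    exact Real.rpow_le_rpow_of_nonpos (by positivity) ((div_le_iff₀' hM).2 hyx) hm

lemma exists_powLog_le_mul_of_comparable (m α M : ℝ) :
    ∃ C, ∀ x y : ℝ, 2 ≤ x → 2 ≤ y → x ≤ M * y → y ≤ M * x →
      powLog m α x ≤ C * powLog m α y := by
  obtain ⟨C₁, hC₁, hpos⟩ := exists_log_rpow_le_mul α one_pos
  obtain ⟨C₂, -, hneg⟩ := exists_log_rpow_le_mul (-α) one_pos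
  refine ⟨M ^ |m| * (max C₁ C₂ * M), fun x y hx hy hxy hyx => ?_⟩
  have hx0 : 0 < x := by linarith
  have hy0 : 0 < y := by linarith
  have hM : 0 < M := pos_of_mul_pos_left (hx0.trans_le hxy) hy0.le
  have hlx : 0 < Real.log x := Real.log_pos (by linarith)
  have hly : 0 < Real.log y := Real.log_pos (by linarith)
  have hlog : Real.log x ^ α ≤ max C₁ C₂ * M * Real.log y ^ α := by
    rcases le_total y x with h | h
    · calc Real.log x ^ α ≤ C₁ * (x / y) ^ (1 : ℝ) * Real.log y ^ α := hpos y x hy h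
        _ ≤ _ := by
          rw [Real.rpow_one]
          gcongr
          exacts [le_max_left _ _, (div_le_iff₀ hy0).2 hxy]
    · have hinv := hneg x y hx h
      rw [Real.rpow_one, Real.rpow_neg hlx.le, Real.rpow_neg hly.le, ← div_eq_mul_inv,
        le_div_iff₀ (by positivity), inv_mul_le_iff₀' (by positivity)] at hinv
      refine hinv.trans ?_
      gcongr
      exacts [le_max_right _ _, (div_le_iff₀ hx0).2 hyx]
  calc powLog m α x ≤ (M ^ |m| * y ^ m) * (max C₁ C₂ * M * Real.log y ^ α) :=
        mul_le_mul (rpow_le_mul_rpow_of_comparable m hx0 hy0 hxy hyx) hlog (by positivity)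
          (by positivity)
    _ = _ := by rw [powLog]; ring

lemma sum_range_rpow_le {t : ℝ} (ht : 0 < t) (hx : 1 ≤ x) (n : ℕ) :
    ∑ k ∈ Finset.range n, (x + k) ^ (-1 - t) ≤ (1 + 1 / t) * x ^ (-t) := by
  have hx0 : 0 < x := by linarith
  have htail : ∑ k ∈ Finset.range n, (x + (k + 1 : ℕ)) ^ (-1 - t) ≤ x ^ (-t) / t := by
    have hanti : AntitoneOn (fun u : ℝ => u ^ (-1 - t)) (Set.Icc x (x + n)) :=
      (Real.antitoneOn_rpow_Ioi_of_exponent_nonpos (by linarith)).mono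
        fun u hu => hx0.trans_le hu.1
    have hintegral : ∫ u in x..x + n, u ^ (-1 - t) = (x ^ (-t) - (x + n) ^ (-t)) / t := by
      rw [integral_rpow (.inr ⟨by linarith, by
        rw [Set.uIcc_of_le (by simp)]; exact fun h => hx0.not_ge h.1⟩)]
      rw [show -1 - t + 1 = -t by ring, div_neg, ← neg_div, neg_sub]
    refine hanti.sum_le_integral.trans ?_
    rw [hintegral]
    gcongr
    exact sub_le_self _ (by positivity)
  have hhead : x ^ (-1 - t) ≤ x ^ (-t) := Real.rpow_le_rpow_of_exponent_le hx (by linarith)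
  calc ∑ k ∈ Finset.range n, (x + k) ^ (-1 - t)
      ≤ ∑ k ∈ Finset.range (n + 1), (x + k) ^ (-1 - t) :=
        Finset.sum_le_sum_of_subset_of_nonneg (Finset.range_mono n.le_succ)
          fun _ _ _ => by positivity
    _ ≤ x ^ (-t) / t + x ^ (-t) := by
        rw [Finset.sum_range_succ', Nat.cast_zero, add_zero]
        exact add_le_add htail hhead
    _ = _ := by ring

lemma exists_sum_range_powLog_le (α : ℝ) (hm : m < -1) :
    ∃ C > 0, ∀ x : ℝ, 2 ≤ x → ∀ n : ℕ,
      ∑ k ∈ Finset.range n, powLog m α (x + k) ≤ C * powLog (m + 1) α x := by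
  set t := (-1 - m) / 2 with ht_def
  have ht : 0 < t := by rw [ht_def]; linarith
  obtain ⟨C, hC, hpotter⟩ := exists_log_rpow_le_mul α ht
  refine ⟨C * (1 + 1 / t), by positivity, fun x hx n => ?_⟩
  have hx0 : 0 < x := by linarith
  have hlog : 0 < Real.log x := Real.log_pos (by linarith)
  have hterm (k : ℕ) :
      powLog m α (x + k) ≤ C * powLog (-t) α x * (x + k) ^ (-1 - t) := by
    have hxk : 0 < x + k := by positivity
    calc powLog m α (x + k)
        ≤ (x + k) ^ m * (C * ((x + k) / x) ^ t * Real.log x ^ α) := by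
          rw [powLog]
          gcongr
          exact hpotter x _ hx (by simp)
      _ = _ := by
          rw [Real.div_rpow hxk.le hx0.le, powLog, Real.rpow_neg hx0.le,
            show -1 - t = m + t by rw [ht_def]; ring, Real.rpow_add hxk]
          field_simp
  calc ∑ k ∈ Finset.range n, powLog m α (x + k)
      ≤ C * powLog (-t) α x * ∑ k ∈ Finset.range n, (x + k) ^ (-1 - t) := by
        rw [Finset.mul_sum]
        exact Finset.sum_le_sum fun k _ => hterm k
    _ ≤ C * powLog (-t) α x * ((1 + 1 / t) * x ^ (-t)) := by
        have := powLog_pos (-t) α (show 1 < x by linarith)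
        gcongr
        exact sum_range_rpow_le ht (by linarith) n
    _ = C * (1 + 1 / t) * (x ^ (-t) * powLog (-t) α x) := by ring
    _ = _ := by rw [rpow_mul_powLog _ _ _ hx0, show -t + -t = m + 1 by rw [ht_def]; ring]

end LogWeights

section IntegerLattice

variable {ι : Type*} [Fintype ι]

/-- The `ℓ¹` norm on `ℤ^ι`. -/
def l1Norm (z : ι → ℤ) : ℕ := ∑ i, (z i).natAbs

/-- The integer-lattice counterpart of `ang`, built on the `ℓ¹` norm. -/
def radius (z : ι → ℤ) : ℝ := l1Norm z + 2

lemma two_le_radius (z : ι → ℤ) : 2 ≤ radius z := le_add_of_nonneg_left (Nat.cast_nonneg _)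

lemma radius_pos (z : ι → ℤ) : 0 < radius z := two_pos.trans_le (two_le_radius z)

lemma powLog_radius_pos (m α : ℝ) (z : ι → ℤ) : 0 < powLog m α (radius z) :=
  powLog_pos m α (one_lt_two.trans_le (two_le_radius z))

lemma nonneg_of_decay {E : Type*} [SeminormedAddGroup E] {g : (ι → ℤ) → E} {B m α : ℝ}
    (hg : ∀ z, ‖g z‖ ≤ B * powLog m α (radius z)) : 0 ≤ B :=
  nonneg_of_mul_nonneg_left ((norm_nonneg _).trans (hg 0)) (powLog_radius_pos m α 0)

lemma l1Norm_eq_zero {z : ι → ℤ} : l1Norm z = 0 ↔ z = 0 := by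
  simp [l1Norm, funext_iff]

lemma natAbs_apply_le_l1Norm (z : ι → ℤ) (i : ι) : (z i).natAbs ≤ l1Norm z :=
  Finset.single_le_sum (f := fun j => (z j).natAbs) (fun _ _ => Nat.zero_le _) (Finset.mem_univ i)

lemma norm_le_l1Norm (z : ι → ℤ) : ‖z‖ ≤ l1Norm z := by
  refine (pi_norm_le_iff_of_nonneg (by positivity)).2 fun i => ?_
  rw [Int.norm_eq_abs, ← Int.cast_abs, Int.abs_eq_natAbs]
  exact_mod_cast natAbs_apply_le_l1Norm z i

lemma summable_norm_rpow_of_lt_neg_card {t : ℝ} (ht : t < -Fintype.card ι) :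
    Summable fun z : ι → ℤ => ‖z‖ ^ t := by
  let L := Submodule.span ℤ (Set.range (Pi.basisFun ℝ ι))
  let toL (z : ι → ℤ) : L := ⟨fun i => z i, (Pi.basisFun ℝ ι).mem_span_iff_repr_mem ℤ _ |>.2
    fun i => ⟨z i, by simp⟩⟩
  have htoL : Function.Injective toL := fun y z h => funext fun i =>
    Int.cast_injective (congrFun (congrArg Subtype.val h) i)
  have hsum := (ZLattice.summable_norm_rpow L t (by simpa [ZLattice.rank ℝ L] using ht)
    ).comp_injective htoL
  refine hsum.congr fun z => ?_
  have hnorm : ‖toL z‖ = ‖z‖ := by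
    simp [toL, Pi.norm_def, nnnorm, Int.norm_eq_abs]
  exact congrArg (· ^ t) hnorm

lemma summable_powLog_radius (α : ℝ) {m : ℝ} (hm : m < -Fintype.card ι) :
    Summable fun z : ι → ℤ => powLog m α (radius z) := by
  set ε := (-Fintype.card ι - m) / 2 with hε_def
  have hε : 0 < ε := by rw [hε_def]; linarith
  have hexp : m + ε < -Fintype.card ι := by rw [hε_def]; linarith
  obtain ⟨C, hC, hpotter⟩ := exists_log_rpow_le_mul α hε
  have hlog2 : 0 < Real.log 2 := Real.log_pos one_lt_two
  have hneg : m + ε ≤ 0 := hexp.le.trans (neg_nonpos.2 (Nat.cast_nonneg _))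
  refine Summable.of_norm_bounded_eventually
    ((summable_norm_rpow_of_lt_neg_card hexp).mul_left (C * (2⁻¹ ^ ε * Real.log 2 ^ α))) ?_
  filter_upwards [(Set.finite_singleton (0 : ι → ℤ)).compl_mem_cofinite] with z hz
  have hr := radius_pos z
  calc ‖powLog m α (radius z)‖ = powLog m α (radius z) :=
        Real.norm_of_nonneg (powLog_radius_pos m α z).le
    _ ≤ radius z ^ m * (C * (radius z / 2) ^ ε * Real.log 2 ^ α) := by
        rw [powLog]
        gcongr
        exact hpotter 2 _ le_rfl (two_le_radius z)
    _ = C * (2⁻¹ ^ ε * Real.log 2 ^ α) * radius z ^ (m + ε) := by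
        rw [div_eq_mul_inv, Real.mul_rpow hr.le (by norm_num), Real.rpow_add hr]
        ring
    _ ≤ C * (2⁻¹ ^ ε * Real.log 2 ^ α) * ‖z‖ ^ (m + ε) := by
        refine mul_le_mul_of_nonneg_left ?_ (by positivity)
        exact Real.rpow_le_rpow_of_nonpos (norm_pos_iff.2 hz)
          ((norm_le_l1Norm z).trans (le_add_of_nonneg_right zero_le_two)) hneg

end IntegerLattice

section InwardTransport

variable {ι : Type*}

/-- The signs `ε` for which a step by `ε` in direction `i` leads away from the origin; both signs
do so when `z i = 0`. -/
def outwardSigns (z : ι → ℤ) (i : ι) : Finset ℤˣ := {ε | 0 ≤ (ε : ℤ) * z i}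

lemma natAbs_add_of_mem_outwardSigns {z : ι → ℤ} {i : ι} {ε : ℤˣ} (hε : ε ∈ outwardSigns z i) :
    (z i + ε).natAbs = (z i).natAbs + 1 := by
  simp only [outwardSigns, Finset.mem_filter_univ] at hε
  rcases Int.units_eq_one_or ε with rfl | rfl <;> simp at hε ⊢ <;> omega

lemma card_outwardSigns (z : ι → ℤ) (i : ι) :
    (outwardSigns z i).card = if z i = 0 then 2 else 1 := by
  have huniv : (Finset.univ : Finset ℤˣ) = {1, -1} := rfl
  rcases lt_trichotomy (z i) 0 with h | h | h
  · simp [outwardSigns, huniv, Finset.filter_insert, Finset.filter_singleton, h.ne, h.not_ge, h.le]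
  · simp [outwardSigns, h]
  · simp [outwardSigns, huniv, Finset.filter_insert, Finset.filter_singleton, h.ne', h.not_ge, h.le]

variable [Fintype ι]

/-- The proportion of the mass at `y` that is sent towards the origin along the axis `i`.
It vanishes for `y = 0`, where the quotient is `0 / 0`. -/
def share (i : ι) (y : ι → ℤ) : ℝ := (y i).natAbs / l1Norm y

lemma share_nonneg (i : ι) (y : ι → ℤ) : 0 ≤ share i y := by unfold share; positivity

lemma share_le_one (i : ι) (y : ι → ℤ) : share i y ≤ 1 :=
  div_le_one_of_le₀ (by exact_mod_cast natAbs_apply_le_l1Norm y i) (by positivity)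

lemma sum_share {y : ι → ℤ} (hy : y ≠ 0) : ∑ i, share i y = 1 := by
  have hl1 : (l1Norm y : ℝ) ≠ 0 := by exact_mod_cast l1Norm_eq_zero.not.2 hy
  simp only [share, ← Finset.sum_div]
  rw [← Nat.cast_sum]
  exact div_self hl1

lemma share_eq_zero {y : ι → ℤ} {i : ι} (h : y i = 0) : share i y = 0 := by simp [share, h]

/-- Two to the number of vanishing coordinates. It compensates for a point on a coordinate
hyperplane receiving mass from both sides. -/
def faceWeight (z : ι → ℤ) : ℝ := ∏ i, if z i = 0 then 2 else 1

lemma one_le_faceWeight (z : ι → ℤ) : 1 ≤ faceWeight z :=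
  Finset.one_le_prod fun i _ => by split_ifs <;> norm_num

lemma faceWeight_le (z : ι → ℤ) : faceWeight z ≤ 2 ^ Fintype.card ι :=
  (Finset.prod_le_prod (fun i _ => by split_ifs <;> norm_num)
    fun i _ => show (if z i = 0 then (2 : ℝ) else 1) ≤ 2 by split_ifs <;> norm_num).trans_eq
      (by simp)

variable [DecidableEq ι]

lemma l1Norm_add_single (z : ι → ℤ) (i : ι) (c : ℤ) :
    l1Norm (z + Pi.single i c) + (z i).natAbs = l1Norm z + (z i + c).natAbs := by
  have herase : ∑ j ∈ Finset.univ.erase i, (z j + (Pi.single i c : ι → ℤ) j).natAbs =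
      ∑ j ∈ Finset.univ.erase i, (z j).natAbs := Finset.sum_congr rfl fun j hj => by
    rw [Pi.single_eq_of_ne (Finset.ne_of_mem_erase hj), add_zero]
  simp only [l1Norm, ← Finset.add_sum_erase _ _ (Finset.mem_univ i), Pi.add_apply,
    Pi.single_eq_same, herase]
  ring

lemma l1Norm_add_single_of_mem_outwardSigns {z : ι → ℤ} {i : ι} {ε : ℤˣ}
    (hε : ε ∈ outwardSigns z i) : l1Norm (z + Pi.single i (ε : ℤ)) = l1Norm z + 1 := by
  have := l1Norm_add_single z i ε
  rw [natAbs_add_of_mem_outwardSigns hε] at this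
  omega

lemma share_add_single {z : ι → ℤ} {i : ι} {ε : ℤˣ} (hε : ε ∈ outwardSigns z i) :
    share i (z + Pi.single i (ε : ℤ)) = ((z i).natAbs + 1) / (l1Norm z + 1) := by
  rw [share, l1Norm_add_single_of_mem_outwardSigns hε, Pi.add_apply, Pi.single_eq_same,
    natAbs_add_of_mem_outwardSigns hε]
  push_cast
  rfl

section Module

variable {E : Type*} [AddCommMonoid E] [Module ℝ E]

/-- One step of the mass flow: the mass `u y` at each `y ≠ 0` is distributed over the lattice
neighbours one step closer to the origin, in the proportions `share i y`. -/
def inwardTransport (u : (ι → ℤ) → E) (z : ι → ℤ) : E :=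
  ∑ i, ∑ ε ∈ outwardSigns z i, share i (z + Pi.single i (ε : ℤ)) • u (z + Pi.single i (ε : ℤ))

end Module

lemma inwardTransport_mono {u v : (ι → ℤ) → ℝ} (h : ∀ z, u z ≤ v z) (z : ι → ℤ) :
    inwardTransport u z ≤ inwardTransport v z :=
  Finset.sum_le_sum fun _ _ => Finset.sum_le_sum fun _ _ =>
    mul_le_mul_of_nonneg_left (h _) (share_nonneg _ _)

lemma card_mul_faceWeight_add_single {z : ι → ℤ} {i : ι} {ε : ℤˣ} (hε : ε ∈ outwardSigns z i) :
    (outwardSigns z i).card * faceWeight (z + Pi.single i (ε : ℤ)) = faceWeight z := by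
  have hne : z i + ε ≠ 0 := fun h => by
    have := natAbs_add_of_mem_outwardSigns hε
    rw [h] at this
    exact absurd this (by simp)
  rw [faceWeight, faceWeight, ← Finset.mul_prod_erase _ _ (Finset.mem_univ i),
    ← Finset.mul_prod_erase _ (fun j => if z j = 0 then (2 : ℝ) else 1) (Finset.mem_univ i),
    Pi.add_apply, Pi.single_eq_same, if_neg hne, one_mul, card_outwardSigns]
  push_cast
  congr 1
  refine Finset.prod_congr rfl fun j hj => ?_
  rw [Pi.add_apply, Pi.single_eq_of_ne (Finset.ne_of_mem_erase hj), add_zero]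

lemma inwardTransport_faceWeight_mul (ψ : ℕ → ℝ) (z : ι → ℤ) :
    inwardTransport (fun y => faceWeight y * ψ (l1Norm y)) z =
      faceWeight z * ((l1Norm z + Fintype.card ι) / (l1Norm z + 1) * ψ (l1Norm z + 1)) := by
  have haxis (i : ι) : ∑ ε ∈ outwardSigns z i, share i (z + Pi.single i (ε : ℤ)) *
        (faceWeight (z + Pi.single i (ε : ℤ)) * ψ (l1Norm (z + Pi.single i (ε : ℤ)))) =
      ((z i).natAbs + 1) * (faceWeight z / (l1Norm z + 1) * ψ (l1Norm z + 1)) := by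
    have hcard : ((outwardSigns z i).card : ℝ) ≠ 0 := by
      rw [card_outwardSigns]; split_ifs <;> norm_num
    have hterm (ε : ℤˣ) (hε : ε ∈ outwardSigns z i) :
        share i (z + Pi.single i (ε : ℤ)) *
          (faceWeight (z + Pi.single i (ε : ℤ)) * ψ (l1Norm (z + Pi.single i (ε : ℤ)))) =
        ((outwardSigns z i).card : ℝ)⁻¹ *
          (((z i).natAbs + 1) * (faceWeight z / (l1Norm z + 1) * ψ (l1Norm z + 1))) := by
      rw [share_add_single hε, l1Norm_add_single_of_mem_outwardSigns hε,
        ← card_mul_faceWeight_add_single hε]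
      field_simp
    rw [Finset.sum_congr rfl hterm, Finset.sum_const, nsmul_eq_mul, mul_inv_cancel_left₀ hcard]
  have hsum : ∑ i, (((z i).natAbs : ℝ) + 1) = l1Norm z + Fintype.card ι := by
    rw [Finset.sum_add_distrib, l1Norm, Nat.cast_sum]
    simp
  simp only [inwardTransport, smul_eq_mul, haxis]
  rw [← Finset.sum_mul, hsum]
  ring

lemma add_div_add_one_le_rpow (n : ℕ) {r : ℝ} (hr : 0 ≤ r) :
    (r + n) / (r + 1) ≤ ((r + 2) / (r + 1)) ^ ((n : ℝ) - 1) := by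
  have hratio : (r + 2) / (r + 1) = 1 + 1 / (r + 1) := by field_simp; ring
  cases n with
  | zero =>
    rw [Nat.cast_zero, zero_sub, Real.rpow_neg_one, inv_div, div_le_div_iff₀ (by positivity)
      (by positivity)]
    nlinarith
  | succ n =>
    rw [Nat.cast_succ, add_sub_cancel_right, Real.rpow_natCast, hratio]
    calc (r + (n + 1)) / (r + 1) = 1 + n * (1 / (r + 1)) := by field_simp; ring
      _ ≤ _ := one_add_mul_le_pow (by linarith [show 0 ≤ 1 / (r + 1) by positivity]) n

section Normed

variable {E : Type*} [NormedAddCommGroup E] [NormedSpace ℝ E]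

lemma norm_inwardTransport_le (u : (ι → ℤ) → E) (z : ι → ℤ) :
    ‖inwardTransport u z‖ ≤ inwardTransport (fun y => ‖u y‖) z :=
  norm_sum_le_of_le _ fun _ _ => norm_sum_le_of_le _ fun _ _ => by
    rw [norm_smul, Real.norm_of_nonneg (share_nonneg _ _), smul_eq_mul]

lemma norm_iterate_inwardTransport_le {φ : ℕ → ℝ} (hφ : ∀ r, 0 ≤ φ r) {g : (ι → ℤ) → E}
    (hg : ∀ z, ‖g z‖ ≤ φ (l1Norm z)) (n : ℕ) (z : ι → ℤ) :
    ‖inwardTransport^[n] g z‖ ≤ faceWeight z *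
      (((l1Norm z + n + 1) / (l1Norm z + 1) : ℝ) ^ ((Fintype.card ι : ℝ) - 1) *
        φ (l1Norm z + n)) := by
  induction n generalizing z with
  | zero =>
    have hone : ((l1Norm z + (0 : ℕ) + 1) / (l1Norm z + 1) : ℝ) = 1 := by
      rw [Nat.cast_zero, add_zero]; exact div_self (by positivity)
    rw [hone, Real.one_rpow, one_mul]
    exact (hg z).trans (le_mul_of_one_le_left (hφ _) (one_le_faceWeight z))
  | succ n ih =>
    set e : ℝ := (Fintype.card ι : ℝ) - 1
    set ψ : ℕ → ℝ := fun r => ((r + n + 1) / (r + 1) : ℝ) ^ e * φ (r + n) with hψ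
    have hψ_nonneg (r : ℕ) : 0 ≤ ψ r := mul_nonneg (by positivity) (hφ _)
    set r := l1Norm z with hr
    have hfactor : ((r + Fintype.card ι) / (r + 1) : ℝ) * ψ (r + 1) ≤
        ((r + (n + 1 : ℕ) + 1) / (r + 1) : ℝ) ^ e * φ (r + (n + 1)) := by
      calc ((r + Fintype.card ι) / (r + 1) : ℝ) * ψ (r + 1)
          ≤ ((r + 2) / (r + 1) : ℝ) ^ e * ψ (r + 1) := mul_le_mul_of_nonneg_right
            (add_div_add_one_le_rpow _ (Nat.cast_nonneg r)) (hψ_nonneg _)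
        _ = _ := by
          rw [hψ, ← mul_assoc, ← Real.mul_rpow (by positivity) (by positivity), add_right_comm r,
            add_assoc r]
          congr 2
          push_cast
          field_simp
          ring
    calc ‖inwardTransport^[n + 1] g z‖
        ≤ inwardTransport (fun y => ‖inwardTransport^[n] g y‖) z := by
          rw [Function.iterate_succ_apply']; exact norm_inwardTransport_le _ z
      _ ≤ inwardTransport (fun y => faceWeight y * ψ (l1Norm y)) z := inwardTransport_mono ih z
      _ = faceWeight z * ((r + Fintype.card ι) / (r + 1) * ψ (r + 1)) :=
          inwardTransport_faceWeight_mul ψ z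
      _ ≤ _ := mul_le_mul_of_nonneg_left hfactor (zero_le_one.trans (one_le_faceWeight z))

end Normed

end InwardTransport

section FirstOrder

variable {ι : Type*} [Fintype ι] [DecidableEq ι]

lemma l1Norm_add_single_one_le (z : ι → ℤ) (i : ι) : l1Norm (z + Pi.single i 1) ≤ l1Norm z + 1 := by
  have := l1Norm_add_single z i 1
  omega

lemma l1Norm_le_add_single_one (z : ι → ℤ) (i : ι) : l1Norm z ≤ l1Norm (z + Pi.single i 1) + 1 := by
  have := l1Norm_add_single z i 1
  omega

lemma exists_powLog_radius_add_single_le (m α : ℝ) :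
    ∃ C, ∀ (z : ι → ℤ) (i : ι),
      powLog m α (radius (z + Pi.single i 1)) ≤ C * powLog m α (radius z) := by
  obtain ⟨C, hC⟩ := exists_powLog_le_mul_of_comparable m α 2
  refine ⟨C, fun z i => hC _ _ (two_le_radius _) (two_le_radius _) ?_ ?_⟩
  · have : (l1Norm (z + Pi.single i 1) : ℝ) ≤ l1Norm z + 1 := by
      exact_mod_cast l1Norm_add_single_one_le z i
    unfold radius
    linarith [Nat.cast_nonneg (α := ℝ) (l1Norm z)]
  · have : (l1Norm z : ℝ) ≤ l1Norm (z + Pi.single i 1) + 1 := by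
      exact_mod_cast l1Norm_le_add_single_one z i
    unfold radius
    linarith [Nat.cast_nonneg (α := ℝ) (l1Norm (z + Pi.single i 1))]

section Algebra

variable {E : Type*} [AddCommGroup E]

/-- The negative discrete divergence of a flux on the lattice, where `h i z` is the flux through the
edge from `z` to `z + e i`. -/
def negDiv (h : ι → (ι → ℤ) → E) (z : ι → ℤ) : E := ∑ i, (h i (z - Pi.single i 1) - h i z)

variable [Module ℝ E]

lemma negDiv_smul (Q : (ι → ℤ) → ℝ) (h : ι → (ι → ℤ) → E) (z : ι → ℤ) :
    negDiv (fun i y => Q (y + Pi.single i 1) • h i y) z =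
      Q z • negDiv h z - ∑ i, (Q (z + Pi.single i 1) - Q z) • h i z := by
  simp only [negDiv, Finset.smul_sum, ← Finset.sum_sub_distrib, sub_add_cancel]
  exact Finset.sum_congr rfl fun i _ => by module

/-- The flux realizing `inwardTransport` when the mass `u y` leaves every `y ≠ 0`: it is carried by
the edges from `y` towards the origin. -/
def inwardFlux (u : (ι → ℤ) → E) (i : ι) (z : ι → ℤ) : E :=
  if 0 ≤ z i then share i (z + Pi.single i 1) • u (z + Pi.single i 1) else -(share i z • u z)

lemma inwardFlux_sub_inwardFlux (u : (ι → ℤ) → E) (i : ι) (z : ι → ℤ) :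
    inwardFlux u i (z - Pi.single i 1) - inwardFlux u i z = share i z • u z -
      ∑ ε ∈ outwardSigns z i, share i (z + Pi.single i (ε : ℤ)) • u (z + Pi.single i (ε : ℤ)) := by
  have huniv : (Finset.univ : Finset ℤˣ) = {1, -1} := rfl
  have hback : z + Pi.single i ((-1 : ℤˣ) : ℤ) = z - Pi.single i 1 := by
    rw [Units.val_neg, Units.val_one, Pi.single_neg, sub_eq_add_neg]
  have hprev : inwardFlux u i (z - Pi.single i 1) = if 1 ≤ z i then share i z • u z else
      -(share i (z - Pi.single i 1) • u (z - Pi.single i 1)) := by simp [inwardFlux]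
  rw [hprev, inwardFlux]
  rcases lt_trichotomy (z i) 0 with h | h | h
  · have hsigns : outwardSigns z i = {-1} := by
      simp [outwardSigns, huniv, Finset.filter_insert, Finset.filter_singleton, h.not_ge, h.le]
    rw [hsigns, Finset.sum_singleton, hback, if_neg (by omega), if_neg (by omega)]
    abel
  · have hsigns : outwardSigns z i = {1, -1} := by simp [outwardSigns, h, huniv]
    rw [hsigns, Finset.sum_pair (by decide), hback, Units.val_one, if_neg (by omega),
      if_pos (by omega), share_eq_zero h, zero_smul]
    abel
  · have hsigns : outwardSigns z i = {1} := by
      simp [outwardSigns, huniv, Finset.filter_insert, Finset.filter_singleton, h.not_ge, h.le]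
    rw [hsigns, Finset.sum_singleton, Units.val_one, if_pos (by omega), if_pos (by omega)]

lemma negDiv_inwardFlux (u : (ι → ℤ) → E) (z : ι → ℤ) :
    negDiv (inwardFlux u) z = (if z = 0 then 0 else u z) - inwardTransport u z := by
  have hleave : ∑ i, share i z • u z = if z = 0 then 0 else u z := by
    split_ifs with hz
    · exact Finset.sum_eq_zero fun i _ => by rw [share_eq_zero (by simp [hz]), zero_smul]
    · rw [← Finset.sum_smul, sum_share hz, one_smul]
  simp only [negDiv, inwardFlux_sub_inwardFlux, Finset.sum_sub_distrib, hleave, inwardTransport]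

end Algebra

variable {E : Type*} [NormedAddCommGroup E] [NormedSpace ℝ E]

lemma rpow_add_sub_one_div_le (e : ℝ) {x t : ℝ} (hx : 2 ≤ x) (ht : 0 ≤ t) :
    ((x + t - 1) / (x - 1)) ^ e ≤ 2 ^ |e| * ((x + t) ^ e * x ^ (-e)) := by
  rw [Real.rpow_neg (by linarith), ← div_eq_mul_inv, ← Real.div_rpow (by linarith) (by linarith)]
  apply rpow_le_mul_rpow_of_comparable
  · exact div_pos (by linarith) (by linarith)
  · exact div_pos (by linarith) (by linarith)
  · rw [← mul_div_assoc, div_le_div_iff₀ (by linarith) (by linarith)]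
    nlinarith
  · rw [← mul_div_assoc, div_le_div_iff₀ (by linarith) (by linarith)]
    nlinarith

lemma norm_iterate_inwardTransport_le_powLog {m α B e : ℝ} (he : e = Fintype.card ι - 1)
    {g : (ι → ℤ) → E} (hg : ∀ z, ‖g z‖ ≤ B * powLog m α (radius z)) (k : ℕ) (z : ι → ℤ) :
    ‖inwardTransport^[k] g z‖ ≤ 2 ^ Fintype.card ι * 2 ^ |e| * B * radius z ^ (-e) *
      powLog (e + m) α (radius z + k) := by
  have hB := nonneg_of_decay hg
  have hxk : 1 < radius z + k := by linarith [two_le_radius z, Nat.cast_nonneg (α := ℝ) k]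
  have hpos := powLog_pos m α hxk
  have hφ (r : ℕ) : 0 ≤ B * powLog m α ((r : ℝ) + 2) :=
    mul_nonneg hB (powLog_pos m α (by linarith [Nat.cast_nonneg (α := ℝ) r])).le
  have hradius : ((l1Norm z + k : ℕ) : ℝ) + 2 = radius z + k := by
    push_cast; rw [radius]; ring
  have hspread : ((l1Norm z + k + 1) / (l1Norm z + 1) : ℝ) ^ e ≤
      2 ^ |e| * ((radius z + k) ^ e * radius z ^ (-e)) := by
    convert rpow_add_sub_one_div_le e (two_le_radius z) k.cast_nonneg using 3 <;> rw [radius] <;> ring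
  calc ‖inwardTransport^[k] g z‖
      ≤ faceWeight z * (((l1Norm z + k + 1) / (l1Norm z + 1) : ℝ) ^ e *
          (B * powLog m α (radius z + k))) := by
        rw [he, ← hradius]
        exact norm_iterate_inwardTransport_le hφ hg k z
    _ ≤ 2 ^ Fintype.card ι * (2 ^ |e| * ((radius z + k) ^ e * radius z ^ (-e)) *
          (B * powLog m α (radius z + k))) := by
        gcongr
        exact faceWeight_le z
    _ = _ := by rw [← rpow_mul_powLog e m α (by linarith)]; ring

lemma exists_sum_norm_iterate_inwardTransport_le (α : ℝ) {m : ℝ} (hm : m < -Fintype.card ι) :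
    ∃ C > 0, ∀ (B : ℝ) (g : (ι → ℤ) → E), (∀ z, ‖g z‖ ≤ B * powLog m α (radius z)) →
      ∀ z n, ∑ k ∈ Finset.range n, ‖inwardTransport^[k] g z‖ ≤
        C * B * powLog (m + 1) α (radius z) := by
  set e : ℝ := (Fintype.card ι : ℝ) - 1 with he
  obtain ⟨C, hC, htail⟩ := exists_sum_range_powLog_le (m := e + m) α (by rw [he]; linarith)
  refine ⟨2 ^ Fintype.card ι * 2 ^ |e| * C, by positivity, fun B g hg z n => ?_⟩
  have hB := nonneg_of_decay hg
  have hradius := radius_pos z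
  calc ∑ k ∈ Finset.range n, ‖inwardTransport^[k] g z‖
      ≤ 2 ^ Fintype.card ι * 2 ^ |e| * B * radius z ^ (-e) *
          ∑ k ∈ Finset.range n, powLog (e + m) α (radius z + k) := by
        rw [Finset.mul_sum]
        exact Finset.sum_le_sum fun k _ => norm_iterate_inwardTransport_le_powLog he hg k z
    _ ≤ 2 ^ Fintype.card ι * 2 ^ |e| * B * radius z ^ (-e) *
          (C * powLog (e + m + 1) α (radius z)) := by
        gcongr
        exact htail _ (two_le_radius z) n
    _ = 2 ^ Fintype.card ι * 2 ^ |e| * C * B *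
          (radius z ^ (-e) * powLog (e + m + 1) α (radius z)) := by ring
    _ = _ := by rw [rpow_mul_powLog _ _ _ hradius, show -e + (e + m + 1) = m + 1 by ring]

/-- The total mass passing through `z` when `g` is transported all the way to the origin. -/
def throughput (g : (ι → ℤ) → E) (z : ι → ℤ) : E := ∑' n, inwardTransport^[n] g z

lemma throughput_eq_add_inwardTransport {g : (ι → ℤ) → E}
    (hg : ∀ z, Summable fun n => inwardTransport^[n] g z) (z : ι → ℤ) :
    throughput g z = g z + inwardTransport (throughput g) z := by
  have hstep :
      HasSum (fun n => inwardTransport^[n + 1] g z) (inwardTransport (throughput g) z) := by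
    simp only [Function.iterate_succ_apply']
    exact hasSum_sum fun i _ => hasSum_sum fun ε _ => (hg _).hasSum.const_smul _
  rw [throughput, (hg z).tsum_eq_zero_add, hstep.tsum_eq, Function.iterate_zero_apply]

/-- A right inverse of `negDiv` on sufficiently decaying fields of zero total mass: the flux of the
transport to the origin. -/
def antidivergence (g : (ι → ℤ) → E) : ι → (ι → ℤ) → E := inwardFlux (throughput g)

lemma negDiv_antidivergence_of_summable {g : (ι → ℤ) → E}
    (hg : ∀ z, Summable fun n => inwardTransport^[n] g z) :
    negDiv (antidivergence g) = g - Pi.single 0 (throughput g 0) := by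
  funext z
  rw [antidivergence, negDiv_inwardFlux,
    ← sub_eq_of_eq_add' (throughput_eq_add_inwardTransport hg z)]
  rcases eq_or_ne z 0 with rfl | hz <;> simp [*]

lemma exists_norm_antidivergence_le (α : ℝ) {m : ℝ} (hm : m < -Fintype.card ι) :
    ∃ C, ∀ (B : ℝ) (g : (ι → ℤ) → E), (∀ z, ‖g z‖ ≤ B * powLog m α (radius z)) →
      ∀ i z, ‖antidivergence g i z‖ ≤ C * B * powLog (m + 1) α (radius z) := by
  obtain ⟨C₁, -, hsum⟩ := exists_sum_norm_iterate_inwardTransport_le (E := E) α hm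
  obtain ⟨C₂, hshift⟩ := exists_powLog_radius_add_single_le (ι := ι) (m + 1) α
  refine ⟨C₁ * max C₂ 1, fun B g hg i z => ?_⟩
  have hH (y : ι → ℤ) : ‖throughput g y‖ ≤ C₁ * B * powLog (m + 1) α (radius y) :=
    (norm_tsum_le_tsum_norm (summable_of_sum_range_le (fun _ => norm_nonneg _)
      (hsum B g hg y))).trans
        (Real.tsum_le_of_sum_range_le (fun _ => norm_nonneg _) (hsum B g hg y))
  have hCB : 0 ≤ C₁ * B := nonneg_of_decay hH
  have hshare (y : ι → ℤ) : ‖share i y • throughput g y‖ ≤ ‖throughput g y‖ := by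
    rw [norm_smul, Real.norm_of_nonneg (share_nonneg i y)]
    exact mul_le_of_le_one_left (norm_nonneg _) (share_le_one i y)
  have hpos := powLog_radius_pos (m + 1) α z
  suffices ‖antidivergence g i z‖ ≤ C₁ * B * (max C₂ 1 * powLog (m + 1) α (radius z)) from
    this.trans_eq (by ring)
  unfold antidivergence inwardFlux
  split_ifs
  · refine (hshare _).trans ((hH _).trans (mul_le_mul_of_nonneg_left ((hshift z i).trans ?_) hCB))
    gcongr
    exact le_max_left _ _
  · rw [norm_neg]
    refine (hshare _).trans ((hH _).trans (mul_le_mul_of_nonneg_left ?_ hCB))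
    exact le_mul_of_one_le_left hpos.le (le_max_right _ _)

end FirstOrder

section DivergenceTheorem

variable {ι : Type*} [Fintype ι]

/-- The piecewise linear cutoff function that equals `1` at the origin and vanishes outside the
`ℓ¹` ball of radius `n + 1`. -/
def cutoff (n : ℕ) (z : ι → ℤ) : ℝ := max (1 - l1Norm z / (n + 1)) 0

lemma norm_cutoff_le_one (n : ℕ) (z : ι → ℤ) : ‖cutoff n z‖ ≤ 1 := by
  rw [Real.norm_of_nonneg (show 0 ≤ cutoff n z from le_max_right _ _)]
  exact max_le (sub_le_self _ (by positivity)) zero_le_one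

lemma cutoff_eq_zero {n : ℕ} {z : ι → ℤ} (h : n + 1 ≤ l1Norm z) : cutoff n z = 0 := by
  have hn : (n + 1 : ℝ) ≤ l1Norm z := by exact_mod_cast h
  exact max_eq_right (sub_nonpos.2 ((one_le_div (by positivity)).2 hn))

lemma finite_support_cutoff (n : ℕ) : (Function.support (cutoff (ι := ι) n)).Finite := by
  refine (Metric.finite_isBounded_inter_isClosed DiscreteTopology.isDiscrete
    (Metric.isBounded_closedBall (x := (0 : ι → ℤ)) (r := n + 1)) isClosed_univ).subset
    fun z hz => ⟨?_, trivial⟩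
  rw [mem_closedBall_zero_iff]
  by_contra! hlt
  exact hz (cutoff_eq_zero (by exact_mod_cast (hlt.trans_le (norm_le_l1Norm z)).le))

lemma tendsto_cutoff (z : ι → ℤ) : Tendsto (fun n => cutoff n z) atTop (𝓝 1) := by
  have hquot : Tendsto (fun n : ℕ => (l1Norm z : ℝ) / (n + 1)) atTop (𝓝 0) :=
    tendsto_const_nhds.div_atTop (tendsto_atTop_add_const_right _ _ tendsto_natCast_atTop_atTop)
  simpa [cutoff] using (hquot.const_sub 1).max (tendsto_const_nhds (x := (0 : ℝ)))

variable [DecidableEq ι]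

lemma abs_cutoff_sub_cutoff_le (n : ℕ) (z : ι → ℤ) (i : ι) :
    |cutoff n (z + Pi.single i 1) - cutoff n z| ≤ 3 / radius z := by
  have hup := l1Norm_add_single_one_le z i
  have hdown := l1Norm_le_add_single_one z i
  have hr := radius_pos z
  rcases le_or_gt (n + 2) (l1Norm z) with hfar | hnear
  · rw [cutoff_eq_zero (by omega), cutoff_eq_zero (by omega), sub_zero, abs_zero]
    positivity
  · have hdiff : |(l1Norm z : ℝ) - l1Norm (z + Pi.single i 1)| ≤ 1 :=
      abs_sub_le_iff.2 ⟨by rw [sub_le_iff_le_add']; exact_mod_cast hdown,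
        by rw [sub_le_iff_le_add']; exact_mod_cast hup⟩
    calc |cutoff n (z + Pi.single i 1) - cutoff n z|
        ≤ |(1 - l1Norm (z + Pi.single i 1) / (n + 1) : ℝ) - (1 - l1Norm z / (n + 1))| := by
          unfold cutoff
          exact abs_max_sub_max_le_abs _ _ _
      _ = |(l1Norm z : ℝ) - l1Norm (z + Pi.single i 1)| / (n + 1) := by
          rw [sub_sub_sub_cancel_left, ← sub_div, abs_div,
            abs_of_pos (show (0 : ℝ) < n + 1 by positivity)]
      _ ≤ 1 / (n + 1) := by gcongr
      _ ≤ 3 / radius z := by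
          have : (l1Norm z : ℝ) ≤ n + 1 := by exact_mod_cast Nat.lt_succ_iff.1 hnear
          rw [div_le_div_iff₀ (by positivity) hr, radius]
          linarith [Nat.cast_nonneg (α := ℝ) n]

variable {E : Type*} [NormedAddCommGroup E]

lemma hasSum_negDiv_of_summable {h : ι → (ι → ℤ) → E} (hh : ∀ i, Summable (h i)) :
    HasSum (negDiv h) 0 := by
  have hshift (i : ι) : HasSum (fun z : ι → ℤ => h i (z - Pi.single i 1)) (∑' z, h i z) := by
    simpa only [Function.comp_def, Equiv.subRight_apply] using
      (Equiv.subRight (Pi.single i (1 : ℤ))).hasSum_iff.2 (hh i).hasSum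
  have htotal := hasSum_sum (s := Finset.univ) fun i _ => (hshift i).sub (hh i).hasSum
  simp only [sub_self, Finset.sum_const_zero] at htotal
  exact htotal

variable [NormedSpace ℝ E]

lemma hasSum_smul_negDiv {Q : (ι → ℤ) → ℝ} (hQ : Q.support.Finite) (h : ι → (ι → ℤ) → E)
    {a : E} (ha : HasSum (fun z => ∑ i, (Q (z + Pi.single i 1) - Q z) • h i z) a) :
    HasSum (fun z => Q z • negDiv h z) a := by
  have hfin (i : ι) : Summable fun y => Q (y + Pi.single i 1) • h i y := by
    have hpre := hQ.preimage (add_left_injective (Pi.single i (1 : ℤ))).injOn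
    exact summable_of_hasFiniteSupport (hpre.subset fun y hy h0 => hy (by
      simp only [show Q (y + Pi.single i 1) = 0 from h0, zero_smul]))
  simpa only [negDiv_smul, sub_add_cancel, zero_add] using (hasSum_negDiv_of_summable hfin).add ha

lemma norm_sum_cutoff_sub_smul_le {h : ι → (ι → ℤ) → E} {c : ι → ℝ} {m α : ℝ}
    (hc : ∀ i z, ‖h i z‖ ≤ c i * powLog m α (radius z)) (n : ℕ) (z : ι → ℤ) :
    ‖∑ i, (cutoff n (z + Pi.single i 1) - cutoff n z) • h i z‖ ≤
      (∑ i, 3 * c i) * powLog (m - 1) α (radius z) := by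
  rw [Finset.sum_mul]
  refine norm_sum_le_of_le _ fun i _ => ?_
  calc ‖(cutoff n (z + Pi.single i 1) - cutoff n z) • h i z‖
      ≤ 3 / radius z * (c i * powLog m α (radius z)) := by
        rw [norm_smul]
        exact mul_le_mul (abs_cutoff_sub_cutoff_le n z i) (hc i z) (norm_nonneg _)
          (div_nonneg (by norm_num) (radius_pos z).le)
    _ = 3 * c i * (radius z ^ (-1 : ℝ) * powLog m α (radius z)) := by
        rw [Real.rpow_neg_one]; ring
    _ = _ := by rw [rpow_mul_powLog _ _ _ (radius_pos z), neg_add_eq_sub]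

/-- A flux decaying faster than the inverse surface area of large balls has no total divergence:
multiply by the cutoffs and sum by parts. -/
lemma eq_zero_of_hasSum_negDiv_real {h : ι → (ι → ℤ) → ℝ} {m α : ℝ} (hm : m < 1 - Fintype.card ι)
    (hdecay : ∀ i, h i =O[⊤] fun z => powLog m α (radius z)) {a : ℝ} (ha : HasSum (negDiv h) a) :
    a = 0 := by
  choose c hc using fun i => Asymptotics.isBigO_top.1 (hdecay i)
  simp only [Real.norm_of_nonneg (powLog_radius_pos m α _).le] at hc
  let defect (n : ℕ) (z : ι → ℤ) : ℝ :=
    ∑ i, (cutoff n (z + Pi.single i 1) - cutoff n z) • h i z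
  have hbound : Summable fun z : ι → ℤ => (∑ i, 3 * c i) * powLog (m - 1) α (radius z) :=
    (summable_powLog_radius α (by linarith)).mul_left _
  have hparts (n : ℕ) : ∑' z, cutoff n z • negDiv h z = ∑' z, defect n z :=
    (hasSum_smul_negDiv (finite_support_cutoff n) h (Summable.of_norm_bounded hbound
      (norm_sum_cutoff_sub_smul_le hc n)).hasSum).tsum_eq
  have hdefect_tendsto : Tendsto (fun n => ∑' z, defect n z) atTop (𝓝 0) := by
    have hpointwise (z : ι → ℤ) : Tendsto (fun n => defect n z) atTop (𝓝 0) := by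
      simpa [defect] using tendsto_finsetSum Finset.univ fun i _ =>
        ((tendsto_cutoff (z + Pi.single i 1)).sub (tendsto_cutoff z)).smul_const (h i z)
    simpa using tendsto_tsum_of_dominated_convergence hbound hpointwise
      (.of_forall (norm_sum_cutoff_sub_smul_le hc))
  have hcutoff_tendsto : Tendsto (fun n => ∑' z, cutoff n z • negDiv h z) atTop (𝓝 a) := by
    rw [← ha.tsum_eq]
    refine tendsto_tsum_of_dominated_convergence ha.summable.norm
      (fun z => by simpa using (tendsto_cutoff z).smul_const (negDiv h z))
      (.of_forall fun n z => ?_)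
    rw [norm_smul]
    exact mul_le_of_le_one_left (norm_nonneg _) (norm_cutoff_le_one n z)
  simp only [hparts] at hcutoff_tendsto
  exact tendsto_nhds_unique hcutoff_tendsto hdefect_tendsto

lemma eq_zero_of_hasSum_negDiv {h : ι → (ι → ℤ) → E} {m α : ℝ} (hm : m < 1 - Fintype.card ι)
    (hdecay : ∀ i, h i =O[⊤] fun z => powLog m α (radius z)) {a : E} (ha : HasSum (negDiv h) a) :
    a = 0 := by
  refine SeparatingDual.eq_zero_iff_forall_dual_eq_zero (R := ℝ) a |>.2 fun φ => ?_
  refine eq_zero_of_hasSum_negDiv_real (h := fun i z => φ (h i z)) hm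
    (fun i => (φ.isBigO_comp (h i) ⊤).trans (hdecay i)) ?_
  have hφ := φ.hasSum ha
  simp only [negDiv, map_sum, map_sub] at hφ
  exact hφ

variable [CompleteSpace E]

lemma negDiv_antidivergence {g : (ι → ℤ) → E} {B m α : ℝ} (hm : m < -Fintype.card ι)
    (hdecay : ∀ z, ‖g z‖ ≤ B * powLog m α (radius z)) (hsum : HasSum g 0) :
    negDiv (antidivergence g) = g := by
  obtain ⟨C, -, hC⟩ := exists_sum_norm_iterate_inwardTransport_le (E := E) α hm
  have hiter (z : ι → ℤ) : Summable fun n => inwardTransport^[n] g z :=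
    (summable_of_sum_range_le (fun _ => norm_nonneg _) (hC B g hdecay z)).of_norm
  have heq := negDiv_antidivergence_of_summable hiter
  suffices throughput g 0 = 0 by rw [heq, this, Pi.single_zero, sub_zero]
  obtain ⟨K, hK⟩ := exists_norm_antidivergence_le (E := E) α hm
  have hflux (i : ι) : antidivergence g i =O[⊤] fun z => powLog (m + 1) α (radius z) :=
    Asymptotics.isBigO_top.2 ⟨K * B, fun z => by
      rw [Real.norm_of_nonneg (powLog_radius_pos _ _ z).le]; exact hK B g hdecay i z⟩
  have htotal : HasSum (negDiv (antidivergence g)) (0 - throughput g 0) := by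
    rw [heq]
    exact hsum.sub (hasSum_pi_single 0 _)
  exact neg_eq_zero.1 ((zero_sub (throughput g 0)).symm.trans
    (eq_zero_of_hasSum_negDiv (by linarith) hflux htotal))

end DivergenceTheorem

section Symmetrization

variable {ι E : Type*} {k : ℕ}

section Module

variable [AddCommGroup E] [Module ℝ E]

/-- The symmetrization of an `E`-valued tensor of order `k`. -/
def symmetrize (T : (Fin k → ι) → E) (σ : Fin k → ι) : E :=
  (k.factorial : ℝ)⁻¹ • ∑ π : Equiv.Perm (Fin k), T (σ ∘ π)

lemma symmetrize_comp_perm (T : (Fin k → ι) → E) (σ : Fin k → ι) (π : Equiv.Perm (Fin k)) :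
    symmetrize T (σ ∘ π) = symmetrize T σ :=
  congrArg ((k.factorial : ℝ)⁻¹ • ·)
    (Equiv.sum_comp (Equiv.mulLeft π) fun ρ : Equiv.Perm (Fin k) => T (σ ∘ ρ))

lemma sum_smul_symmetrize [Fintype ι] {Q : (Fin k → ι) → ℝ}
    (hQ : ∀ σ (π : Equiv.Perm (Fin k)), Q (σ ∘ π) = Q σ) (T : (Fin k → ι) → E) :
    ∑ σ, Q σ • symmetrize T σ = ∑ σ, Q σ • T σ := by
  classical
  have hperm (π : Equiv.Perm (Fin k)) : ∑ σ, Q σ • T (σ ∘ π) = ∑ σ, Q σ • T σ := by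
    rw [← Equiv.sum_comp (π.arrowCongr (Equiv.refl ι)).symm fun σ => Q σ • T σ]
    exact Finset.sum_congr rfl fun σ _ => congrArg (· • T (σ ∘ π)) (hQ σ π).symm
  have hk : (k.factorial : ℝ) ≠ 0 := by positivity
  simp only [symmetrize, smul_comm (Q _) ((k.factorial : ℝ)⁻¹), ← Finset.smul_sum]
  simp only [Finset.smul_sum (r := Q _)]
  rw [Finset.sum_comm]
  simp only [hperm, Finset.sum_const, Finset.card_univ, Fintype.card_perm, Fintype.card_fin,
    ← Nat.cast_smul_eq_nsmul ℝ, inv_smul_smul₀ hk]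

end Module

lemma norm_symmetrize_le [NormedAddCommGroup E] [NormedSpace ℝ E] {T : (Fin k → ι) → E} {B : ℝ}
    (hT : ∀ σ, ‖T σ‖ ≤ B) (σ : Fin k → ι) : ‖symmetrize T σ‖ ≤ B := by
  have hk : (0 : ℝ) < k.factorial := by positivity
  rw [symmetrize, norm_smul, norm_inv, RCLike.norm_natCast, inv_mul_le_iff₀ hk]
  calc ‖∑ π : Equiv.Perm (Fin k), T (σ ∘ π)‖ ≤ ∑ _π : Equiv.Perm (Fin k), B :=
        norm_sum_le_of_le _ fun π _ => hT _
    _ = k.factorial * B := by simp [Fintype.card_perm]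

variable [DecidableEq ι]

/-- The multi-index counting how often each direction occurs in `σ`. -/
def count (σ : Fin k → ι) : ι → ℤ := ∑ m, Pi.single (σ m) 1

lemma count_comp_perm (σ : Fin k → ι) (π : Equiv.Perm (Fin k)) : count (σ ∘ π) = count σ :=
  Equiv.sum_comp π fun m => (Pi.single (σ m) 1 : ι → ℤ)

lemma count_snoc (σ : Fin k → ι) (i : ι) :
    count (Fin.snoc σ i : Fin (k + 1) → ι) = count σ + Pi.single i 1 := by
  simp [count, Fin.sum_univ_castSucc]

lemma sum_count [Fintype ι] (σ : Fin k → ι) : ∑ i, count σ i = k := by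
  simp [count, Finset.sum_comm (s := (Finset.univ : Finset ι))]

lemma count_apply (σ : Fin k → ι) (i : ι) : count σ i = Fintype.card {m // σ m = i} := by
  simp [count, Fintype.card_subtype, Pi.single_apply, eq_comm]

lemma exists_perm_of_count_eq {σ τ : Fin k → ι} (h : count σ = count τ) :
    ∃ π : Equiv.Perm (Fin k), τ ∘ π = σ := by
  have hfiber (i : ι) : Nonempty ({m // σ m = i} ≃ {m // τ m = i}) := by
    have hi := congrFun h i
    rw [count_apply, count_apply] at hi
    exact Fintype.card_eq.1 (by exact_mod_cast hi)
  exact ⟨Equiv.ofFiberEquiv fun i => (hfiber i).some, funext (Equiv.ofFiberEquiv_map _)⟩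

end Symmetrization

section NewtonPolynomials

/-- The binomial polynomial `x choose n`, which is `0` for `n < 0`. Negative lower entries keep the
Pascal rule valid without case distinctions. -/
def binomPoly (n : ℤ) (x : ℝ) : ℝ := if 0 ≤ n then Ring.choose x n.toNat else 0

lemma binomPoly_of_neg {n : ℤ} (hn : n < 0) (x : ℝ) : binomPoly n x = 0 := if_neg hn.not_ge

lemma binomPoly_zero (x : ℝ) : binomPoly 0 x = 1 := by
  simp [binomPoly]

lemma binomPoly_add_one_sub (n : ℤ) (x : ℝ) :
    binomPoly n (x + 1) - binomPoly n x = binomPoly (n - 1) x := by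
  rcases lt_trichotomy n 0 with hn | rfl | hn
  · simp [binomPoly_of_neg, hn, (sub_one_lt n).trans hn]
  · simp [binomPoly_zero, binomPoly_of_neg]
  · obtain ⟨k, rfl⟩ := Int.eq_succ_of_zero_lt hn
    rw [add_sub_cancel_right, binomPoly, binomPoly, binomPoly, if_pos hn.le, if_pos hn.le,
      if_pos (Int.natCast_nonneg k), Int.toNat_natCast,
      show ((k : ℤ) + 1).toNat = k + 1 from Int.toNat_natCast (k + 1), Ring.choose_succ_succ,
      add_sub_cancel_right]

lemma choose_eq_prod_range (x : ℝ) (n : ℕ) :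
    Ring.choose x n = (n.factorial : ℝ)⁻¹ * ∏ r ∈ Finset.range n, (x - r) := by
  rw [Ring.choose_eq_smul, ← descPochhammer_eval_eq_prod_range, smul_eq_mul,
    ← Polynomial.aeval_eq_smeval, ← descPochhammer_map (algebraMap ℤ ℝ),
    Polynomial.eval_map_algebraMap]

variable {ι : Type*} [Fintype ι]

/-- The multivariate Newton basis polynomial `∏ i, (z i choose γ i)`. -/
def newton (γ z : ι → ℤ) : ℝ := ∏ i, binomPoly (γ i) (z i)

lemma newton_eq_zero_of_neg {γ : ι → ℤ} {i : ι} (hi : γ i < 0) (z : ι → ℤ) : newton γ z = 0 :=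
  Finset.prod_eq_zero (Finset.mem_univ i) (binomPoly_of_neg hi _)

lemma newton_zero (z : ι → ℤ) : newton 0 z = 1 := by
  simp [newton, binomPoly_zero]

lemma newton_eq_zero_of_sum_eq_zero {γ : ι → ℤ} (hsum : ∑ i, γ i = 0) (hne : γ ≠ 0) (z : ι → ℤ) :
    newton γ z = 0 := by
  obtain ⟨i, hi⟩ : ∃ i, γ i < 0 := by
    by_contra! hnonneg
    exact hne ((Fintype.sum_eq_zero_iff_of_nonneg hnonneg).1 hsum)
  exact newton_eq_zero_of_neg hi z

lemma isBigO_choose_apply (n : ℕ) (i : ι) :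
    (fun z : ι → ℤ => Ring.choose (z i : ℝ) n) =O[⊤] fun z => radius z ^ n := by
  have hfactor (r : ℕ) : (fun z : ι → ℤ => (z i : ℝ) - r) =O[⊤] radius := by
    refine Asymptotics.isBigO_top.2 ⟨1 + r, fun z => ?_⟩
    have hz : |(z i : ℝ)| ≤ radius z := by
      rw [← Int.cast_abs, Int.abs_eq_natAbs]
      exact (show (((z i).natAbs : ℤ) : ℝ) ≤ l1Norm z by
        exact_mod_cast natAbs_apply_le_l1Norm z i).trans (le_add_of_nonneg_right zero_le_two)
    rw [Real.norm_of_nonneg (radius_pos z).le]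
    calc |(z i : ℝ) - r| ≤ |(z i : ℝ)| + |(r : ℝ)| := abs_sub _ _
      _ ≤ radius z + r * radius z := by
        rw [Nat.abs_cast]
        gcongr
        exact le_mul_of_one_le_right (Nat.cast_nonneg r) (one_le_two.trans (two_le_radius z))
      _ = (1 + r) * radius z := by ring
  have hprod := Asymptotics.IsBigO.finsetProd (s := Finset.range n) fun r _ => hfactor r
  simp only [Finset.prod_const, Finset.card_range] at hprod
  exact (hprod.const_mul_left (n.factorial : ℝ)⁻¹).congr_left fun z =>
    (choose_eq_prod_range _ n).symm

lemma isBigO_newton (γ : ι → ℤ) :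
    newton γ =O[⊤] fun z => powLog ((∑ i, γ i : ℤ) : ℝ) 0 (radius z) := by
  by_cases hγ : ∃ i, γ i < 0
  · obtain ⟨i, hi⟩ := hγ
    simp only [funext (newton_eq_zero_of_neg hi), Asymptotics.isBigO_zero]
  push Not at hγ
  have hfactor (i : ι) : (fun z : ι → ℤ => binomPoly (γ i) (z i)) =O[⊤]
      fun z => radius z ^ (γ i).toNat := by
    simpa only [binomPoly, if_pos (hγ i)] using isBigO_choose_apply (γ i).toNat i
  refine (Asymptotics.IsBigO.finsetProd fun i _ => hfactor i).congr_right fun z => ?_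
  have hdegree : ((∑ i, γ i : ℤ) : ℝ) = ((∑ i, (γ i).toNat : ℕ) : ℝ) := by
    push_cast
    exact Finset.sum_congr rfl fun i _ => by exact_mod_cast (Int.toNat_of_nonneg (hγ i)).symm
  rw [powLog, Real.rpow_zero, mul_one, hdegree, Real.rpow_natCast, Finset.prod_pow_eq_pow_sum]

variable [DecidableEq ι]

lemma newton_add_single_sub (γ z : ι → ℤ) (j : ι) :
    newton γ (z + Pi.single j 1) - newton γ z = newton (γ - Pi.single j 1) z := by
  have hrest (γ' z' : ι → ℤ) (h : ∀ i ≠ j, γ' i = γ i ∧ z' i = z i) :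
      newton γ' z' = binomPoly (γ' j) (z' j) * ∏ i ∈ {j}ᶜ, binomPoly (γ i) (z i) := by
    rw [newton, Fintype.prod_eq_mul_prod_compl j]
    refine congrArg _ (Finset.prod_congr rfl fun i hi => ?_)
    obtain ⟨hγ, hz⟩ := h i (by simpa using hi)
    rw [hγ, hz]
  rw [hrest γ (z + Pi.single j 1) fun i hi => by simp [hi], hrest γ z fun i _ => ⟨rfl, rfl⟩,
    hrest (γ - Pi.single j 1) z fun i hi => by simp [hi], ← sub_mul]
  simp [binomPoly_add_one_sub]

end NewtonPolynomials

section TensorPotentials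

variable {ι : Type*} [Fintype ι]
variable {E : Type*} [NormedAddCommGroup E] [NormedSpace ℝ E]

lemma isBigO_smul_powLog {Q : (ι → ℤ) → ℝ} {G : (ι → ℤ) → E} {t m α : ℝ}
    (hQ : Q =O[⊤] fun z => powLog t 0 (radius z)) (hG : G =O[⊤] fun z => powLog m α (radius z)) :
    (fun z => Q z • G z) =O[⊤] fun z => powLog (t + m) α (radius z) := by
  refine (hQ.smul hG).congr_right fun z => ?_
  rw [smul_eq_mul, powLog, Real.rpow_zero, mul_one, rpow_mul_powLog _ _ _ (radius_pos z)]

variable [DecidableEq ι]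

/-- The moments of order less than `p` of a field of tensors of order `k` vanish, where a component
`σ` already accounts for `k` orders. For `k = 0` these are the moments of a plain field, tested
against the Newton basis of the polynomials of degree less than `p`. -/
def HasVanishingMoments (p : ℕ) {k : ℕ} (F : (ι → ℤ) → (Fin k → ι) → E) : Prop :=
  ∀ β : ι → ℤ, ∑ i, β i < p → HasSum (fun z => ∑ σ, newton (β - count σ) z • F z σ) 0

lemma HasVanishingMoments.hasSum_symmetrize {p k : ℕ} {F : (ι → ℤ) → (Fin k → ι) → E}
    (hF : HasVanishingMoments p F) (hk : k < p) (σ : Fin k → ι) :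
    HasSum (fun z => symmetrize (F z) σ) 0 := by
  let orbit := Finset.univ.filter fun τ : Fin k → ι => count σ = count τ
  have hnewton (τ : Fin k → ι) (z : ι → ℤ) :
      newton (count σ - count τ) z = if count σ = count τ then 1 else 0 := by
    split_ifs with h
    · rw [h, sub_self, newton_zero]
    · exact newton_eq_zero_of_sum_eq_zero (by simp [sum_count]) (sub_ne_zero.2 h) z
  have hsum (z : ι → ℤ) : ∑ τ, newton (count σ - count τ) z • F z τ =
      (orbit.card : ℝ) • symmetrize (F z) σ := by
    rw [← sum_smul_symmetrize fun τ π => by rw [count_comp_perm]]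
    simp only [hnewton, ite_smul, one_smul, zero_smul, ← Finset.sum_filter]
    rw [Nat.cast_smul_eq_nsmul, ← Finset.sum_const]
    refine Finset.sum_congr rfl fun τ hτ => ?_
    obtain ⟨π, rfl⟩ := exists_perm_of_count_eq (Finset.mem_filter_univ τ |>.1 hτ).symm
    exact symmetrize_comp_perm (F z) σ π
  have horbit : (orbit.card : ℝ) ≠ 0 :=
    Nat.cast_ne_zero.2 (Finset.card_ne_zero_of_mem (Finset.mem_filter_univ σ |>.2 rfl))
  have hzero := (hF (count σ) (by rw [sum_count]; exact_mod_cast hk)).const_smul (orbit.card : ℝ)⁻¹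
  simpa only [hsum, inv_smul_smul₀ horbit, smul_zero] using hzero

lemma sum_newton_smul_eq_sub_negDiv {k : ℕ} {F : (ι → ℤ) → (Fin k → ι) → E}
    {G : (ι → ℤ) → (Fin (k + 1) → ι) → E}
    (hFG : ∀ z σ, symmetrize (F z) σ = negDiv (fun i y => G y (Fin.snoc σ i)) z)
    (β z : ι → ℤ) :
    ∑ τ, newton (β - count τ) z • G z τ = ∑ σ, newton (β - count σ) z • F z σ -
      negDiv (fun i y => ∑ σ : Fin k → ι, newton (β - count σ) (y + Pi.single i 1) •
        G y (Fin.snoc σ i)) z := by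
  have hparts (σ : Fin k → ι) :
      ∑ i, newton (β - count (Fin.snoc σ i : Fin (k + 1) → ι)) z • G z (Fin.snoc σ i) =
        newton (β - count σ) z • symmetrize (F z) σ -
          negDiv (fun i y => newton (β - count σ) (y + Pi.single i 1) • G y (Fin.snoc σ i)) z := by
    rw [negDiv_smul, hFG, sub_sub_cancel]
    simp only [newton_add_single_sub, count_snoc, sub_sub]
  have hsplit : ∑ τ, newton (β - count τ) z • G z τ = ∑ σ : Fin k → ι, ∑ i,
      newton (β - count (Fin.snoc σ i : Fin (k + 1) → ι)) z • G z (Fin.snoc σ i) := by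
    rw [← (Fin.snocEquiv fun _ => ι).sum_comp, Fintype.sum_prod_type_right]
    rfl
  rw [hsplit, Finset.sum_congr rfl fun σ _ => hparts σ, Finset.sum_sub_distrib,
    sum_smul_symmetrize fun σ π => by rw [count_comp_perm]]
  simp only [negDiv, ← Finset.sum_sub_distrib (s := (Finset.univ : Finset (Fin k → ι)))]
  rw [Finset.sum_comm (s := (Finset.univ : Finset ι)), Finset.sum_sub_distrib]

lemma isBigO_newton_add_single (γ : ι → ℤ) (j : ι) :
    (fun z => newton γ (z + Pi.single j 1)) =O[⊤]
      fun z => powLog ((∑ i, γ i : ℤ) : ℝ) 0 (radius z) := by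
  obtain ⟨C, hC⟩ := exists_powLog_radius_add_single_le (ι := ι) ((∑ i, γ i : ℤ) : ℝ) 0
  refine ((isBigO_newton γ).comp_tendsto (k := (· + Pi.single j 1)) tendsto_top).trans
    (Asymptotics.isBigO_top.2 ⟨C, fun z => ?_⟩)
  simpa only [Function.comp_apply, Real.norm_of_nonneg (powLog_radius_pos _ _ _).le] using hC z j

lemma HasVanishingMoments.of_symmetrize_eq_negDiv [CompleteSpace E] {p k : ℕ}
    {F : (ι → ℤ) → (Fin k → ι) → E} {G : (ι → ℤ) → (Fin (k + 1) → ι) → E}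
    (hF : HasVanishingMoments p F)
    (hFG : ∀ z σ, symmetrize (F z) σ = negDiv (fun i y => G y (Fin.snoc σ i)) z) {m α : ℝ}
    (hm : p + m < k + 2 - Fintype.card ι)
    (hG : ∀ τ, (fun z => G z τ) =O[⊤] fun z => powLog m α (radius z)) :
    HasVanishingMoments p G := by
  intro β hβ
  have hdegree : ((∑ i, β i : ℤ) : ℝ) ≤ p - 1 := by exact_mod_cast Int.le_sub_one_of_lt hβ
  have hmoment : Summable fun z => ∑ τ, newton (β - count τ) z • G z τ := by
    refine summable_sum fun τ _ => ?_
    have hdecay := isBigO_smul_powLog (isBigO_newton (β - count τ)) (hG τ)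
    refine summable_of_isBigO (summable_powLog_radius α ?_) (hdecay.mono le_top)
    simp only [Pi.sub_apply, Finset.sum_sub_distrib, sum_count]
    push_cast at hdegree ⊢
    linarith
  let flux (i : ι) (y : ι → ℤ) : E :=
    ∑ σ : Fin k → ι, newton (β - count σ) (y + Pi.single i 1) • G y (Fin.snoc σ i)
  have hflux_decay (i : ι) :
      flux i =O[⊤] fun z => powLog (((∑ j, β j : ℤ) : ℝ) - k + m) α (radius z) := by
    refine Asymptotics.IsBigO.fun_sum fun σ _ => ?_
    simpa [sum_count] using
      isBigO_smul_powLog (isBigO_newton_add_single (β - count σ) i) (hG (Fin.snoc σ i))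
  have hmoment_eq (z : ι → ℤ) := sum_newton_smul_eq_sub_negDiv hFG β z
  have hflux : HasSum (negDiv flux) (0 - ∑' z, ∑ τ, newton (β - count τ) z • G z τ) := by
    refine ((hF β hβ).sub hmoment.hasSum).congr_fun fun z => ?_
    rw [hmoment_eq, sub_sub_cancel]
  have hzero := eq_zero_of_hasSum_negDiv (by linarith) hflux_decay hflux
  rw [zero_sub, neg_eq_zero] at hzero
  exact hzero ▸ hmoment.hasSum

/-- The successive potentials of a field `g`: each order is the antidivergence of the
symmetrization of the previous one, with the new direction stored in the last index. -/
def tensorPotential (g : (ι → ℤ) → E) : (k : ℕ) → (ι → ℤ) → (Fin k → ι) → E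
  | 0 => fun z _ => g z
  | k + 1 => fun z τ =>
      antidivergence (fun y => symmetrize (tensorPotential g k y) (Fin.init τ)) (τ (Fin.last k)) z

lemma exists_norm_tensorPotential_le (α : ℝ) {q : ℝ} {k : ℕ} (hk : Fintype.card ι + k < q + 1) :
    ∃ C, ∀ (B : ℝ) (g : (ι → ℤ) → E), (∀ z, ‖g z‖ ≤ B * powLog (-q) α (radius z)) →
      ∀ z τ, ‖tensorPotential g k z τ‖ ≤ C * B * powLog (-q + k) α (radius z) := by
  induction k with
  | zero => exact ⟨1, fun B g hg z _ => by simpa [tensorPotential] using hg z⟩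
  | succ k ih =>
    push_cast at hk
    obtain ⟨C₁, hC₁⟩ := ih (by linarith)
    obtain ⟨C₂, hC₂⟩ := exists_norm_antidivergence_le (ι := ι) (E := E) α (m := -q + k)
      (by linarith)
    refine ⟨C₂ * C₁, fun B g hg z τ => ?_⟩
    rw [mul_assoc C₂, Nat.cast_succ, ← add_assoc]
    exact hC₂ _ _ (fun y => norm_symmetrize_le (hC₁ B g hg y) _) _ z

variable [CompleteSpace E] {g : (ι → ℤ) → E} {B α q : ℝ} {p k : ℕ}

lemma symmetrize_tensorPotential_of_hasVanishingMoments (hq : Fintype.card ι + p < q + 1)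
    (hg : ∀ z, ‖g z‖ ≤ B * powLog (-q) α (radius z)) (hk : k < p)
    (hmoments : HasVanishingMoments p (tensorPotential g k)) (z : ι → ℤ) (σ : Fin k → ι) :
    symmetrize (tensorPotential g k z) σ =
      negDiv (fun i y => tensorPotential g (k + 1) y (Fin.snoc σ i)) z := by
  have hkp : (k : ℝ) + 1 ≤ p := by exact_mod_cast hk
  obtain ⟨C, hC⟩ := exists_norm_tensorPotential_le (ι := ι) (E := E) (q := q) (k := k) α
    (by linarith)
  have hinverse := negDiv_antidivergence (by linarith)
    (fun y => norm_symmetrize_le (hC B g hg y) σ) (hmoments.hasSum_symmetrize hk σ)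
  simpa only [tensorPotential, Fin.init_snoc, Fin.snoc_last] using (congrFun hinverse z).symm

lemma hasVanishingMoments_tensorPotential (hq : Fintype.card ι + p < q + 1)
    (hg : ∀ z, ‖g z‖ ≤ B * powLog (-q) α (radius z))
    (hmoments : HasVanishingMoments p (tensorPotential g 0)) (hk : k ≤ p) :
    HasVanishingMoments p (tensorPotential g k) := by
  induction k with
  | zero => exact hmoments
  | succ k ih =>
    have hkp : (k : ℝ) + 1 ≤ p := by exact_mod_cast hk
    obtain ⟨C, hC⟩ := exists_norm_tensorPotential_le (ι := ι) (E := E) (q := q) (k := k + 1) α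
      (by push_cast; linarith)
    have hprev := ih (Nat.le_of_succ_le hk)
    refine hprev.of_symmetrize_eq_negDiv
      (symmetrize_tensorPotential_of_hasVanishingMoments hq hg hk hprev)
      (m := -q + (k + 1 : ℕ)) (α := α) (by push_cast; linarith) fun τ =>
        Asymptotics.isBigO_top.2 ⟨C * B, fun z => ?_⟩
    rw [Real.norm_of_nonneg (powLog_radius_pos _ _ z).le]
    exact hC B g hg z τ

lemma symmetrize_tensorPotential (hq : Fintype.card ι + p < q + 1)
    (hg : ∀ z, ‖g z‖ ≤ B * powLog (-q) α (radius z))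
    (hmoments : HasVanishingMoments p (tensorPotential g 0)) (hk : k < p) (z : ι → ℤ)
    (σ : Fin k → ι) :
    symmetrize (tensorPotential g k z) σ =
      negDiv (fun i y => tensorPotential g (k + 1) y (Fin.snoc σ i)) z :=
  symmetrize_tensorPotential_of_hasVanishingMoments hq hg hk
    (hasVanishingMoments_tensorPotential hq hg hmoments hk.le) z σ

end TensorPotentials

section PolynomialMoments

lemma prod_get_toList_toMultiset {ι M : Type*} [CommMonoid M] (c : ι →₀ ℕ) (x : ι → M) :
    ∏ m, x ((Finsupp.toMultiset c).toList.get m) = ∏ i ∈ c.support, x i ^ c i := by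
  classical
  calc ∏ m, x ((Finsupp.toMultiset c).toList.get m)
      = ((Finsupp.toMultiset c).map x).prod :=
        (Fin.prod_univ_fun_getElem _ x).trans (Multiset.prod_map_toList _ x)
    _ = ∏ i ∈ c.support, x i ^ c i := by
        simp only [Finset.prod_multiset_map_count, Finsupp.toFinset_toMultiset,
          Finsupp.count_toMultiset]

variable {Z ι κ : Type*} {f : Z → ℝ} {x : Z → ι → ℝ} {p : ℕ}

lemma hasSum_mul_eval_of_moments
    (hmoments : ∀ j < p, ∀ js : Fin j → ι, HasSum (fun z => f z * ∏ m, x z (js m)) 0)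
    {P : MvPolynomial ι ℝ} (hP : P.totalDegree < p) :
    HasSum (fun z => f z * MvPolynomial.eval (x z) P) 0 := by
  have hmonomial (c) (hc : c ∈ P.support) :
      HasSum (fun z => f z * ∏ i ∈ c.support, x z i ^ c i) 0 := by
    have hlength : (Finsupp.toMultiset c).toList.length < p := by
      rw [Multiset.length_toList, Finsupp.card_toMultiset]
      exact (MvPolynomial.le_totalDegree hc).trans_lt hP
    simpa only [prod_get_toList_toMultiset] using
      hmoments _ hlength (Finsupp.toMultiset c).toList.get
  have hsum := hasSum_sum fun c hc => (hmonomial c hc).mul_left (P.coeff c)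
  simp only [mul_zero, Finset.sum_const_zero] at hsum
  refine hsum.congr_fun fun z => ?_
  rw [MvPolynomial.eval_eq, Finset.mul_sum]
  exact Finset.sum_congr rfl fun c _ => mul_left_comm _ _ _

variable [Fintype ι] [Fintype κ] {γ : κ → ℤ}

lemma exists_mvPolynomial_eval_eq_newton (R : κ → ι → ℝ) (hγ : ∀ i, 0 ≤ γ i) :
    ∃ P : MvPolynomial ι ℝ, (P.totalDegree : ℤ) ≤ ∑ i, γ i ∧
      ∀ (c : κ → ℤ) (y : ι → ℝ), (∀ i, (c i : ℝ) = ∑ j, R i j * y j) →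
        MvPolynomial.eval y P = newton γ c := by
  let coordinate (i : κ) : MvPolynomial ι ℝ := ∑ j, MvPolynomial.C (R i j) * MvPolynomial.X j
  have hcoordinate (i : κ) : (coordinate i).totalDegree ≤ 1 :=
    MvPolynomial.totalDegree_finsetSum_le fun j _ =>
      (MvPolynomial.totalDegree_mul _ _).trans (by simp)
  let factor (i : κ) : MvPolynomial ι ℝ := MvPolynomial.C ((γ i).toNat.factorial : ℝ)⁻¹ *
    ∏ r ∈ Finset.range (γ i).toNat, (coordinate i - MvPolynomial.C (r : ℝ))
  have hfactor (i : κ) : (factor i).totalDegree ≤ (γ i).toNat := by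
    refine (MvPolynomial.totalDegree_mul _ _).trans ?_
    rw [MvPolynomial.totalDegree_C, zero_add]
    refine (MvPolynomial.totalDegree_finsetProd _ _).trans ((Finset.sum_le_card_nsmul _ _ 1
      fun r _ => (MvPolynomial.totalDegree_sub_C_le _ _).trans (hcoordinate i)).trans_eq ?_)
    simp
  refine ⟨∏ i, factor i, ?_, fun c y hcy => ?_⟩
  · calc ((∏ i, factor i).totalDegree : ℤ) ≤ ∑ i, ((γ i).toNat : ℤ) := by
          exact_mod_cast (MvPolynomial.totalDegree_finsetProd _ _).trans
            (Finset.sum_le_sum fun i _ => hfactor i)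
      _ = ∑ i, γ i := Finset.sum_congr rfl fun i _ => Int.toNat_of_nonneg (hγ i)
  · rw [map_prod, newton]
    refine Finset.prod_congr rfl fun i _ => ?_
    rw [binomPoly, if_pos (hγ i), choose_eq_prod_range, hcy]
    simp [factor, coordinate]

lemma hasSum_mul_newton_of_moments
    (hmoments : ∀ j < p, ∀ js : Fin j → ι, HasSum (fun z => f z * ∏ m, x z (js m)) 0)
    {R : κ → ι → ℝ} {c : Z → κ → ℤ} (hc : ∀ z i, (c z i : ℝ) = ∑ j, R i j * x z j)
    (hγ : ∑ i, γ i < p) :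
    HasSum (fun z => f z * newton γ (c z)) 0 := by
  by_cases hneg : ∃ i, γ i < 0
  · obtain ⟨i, hi⟩ := hneg
    simp [newton_eq_zero_of_neg hi, hasSum_zero]
  push Not at hneg
  obtain ⟨P, hdegree, hP⟩ := exists_mvPolynomial_eval_eq_newton R hneg
  simpa only [fun z => hP (c z) (x z) (hc z)] using
    hasSum_mul_eval_of_moments hmoments (P := P) (by omega)

end PolynomialMoments

section LatticeCoordinates

section Module

variable {ι V : Type*} [Fintype ι] [AddCommGroup V] [Module ℝ V]

/-- The point of the lattice spanned by the basis `b` that has integer coordinates `z`. -/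
def latticePoint (b : Module.Basis ι ℝ V) (z : ι → ℤ) : V := ∑ i, (z i : ℝ) • b i

variable (b : Module.Basis ι ℝ V)

lemma equivFun_latticePoint (z : ι → ℤ) : b.equivFun (latticePoint b z) = fun i => (z i : ℝ) :=
  (b.equivFun_symm_apply _ ▸ b.equivFun.apply_symm_apply fun i => (z i : ℝ) :)

lemma latticePoint_injective : Function.Injective (latticePoint b) := fun y z h => by
  have hcoord := congrArg b.equivFun h
  rw [equivFun_latticePoint, equivFun_latticePoint] at hcoord
  exact funext fun i => Int.cast_injective (congrFun hcoord i)

lemma latticePoint_sub_basis [DecidableEq ι] (z : ι → ℤ) (i : ι) :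
    latticePoint b z - b i = latticePoint b (z - Pi.single i 1) := by
  simp [latticePoint, sub_smul, Pi.single_apply, ite_smul]

end Module

variable {d : ℕ}

lemma exists_equiv_latticePt_eq_latticePoint {A : Matrix (Fin d) (Fin d) ℝ}
    (b : Module.Basis (Fin d) ℝ (Vec d)) (hb : ∀ i, b i ∈ Lattice d A)
    (hspan : ∀ x ∈ Lattice d A, ∃ z, x = latticePoint b z) :
    ∃ e : (Fin d → ℤ) ≃ (Fin d → ℤ), ∀ z, latticePt d A z = latticePoint b (e z) := by
  choose w hw using hb
  choose e he using fun z => hspan (latticePt d A z) ⟨z, rfl⟩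
  have hw' (i : Fin d) : A.mulVecLin (fun j => (w i j : ℝ)) = b i := hw i
  have hsurjective : Function.Surjective A.mulVecLin := by
    rw [← LinearMap.range_eq_top, eq_top_iff, ← b.span_eq, Submodule.span_le]
    rintro _ ⟨i, rfl⟩
    exact ⟨_, hw' i⟩
  have hinjective := LinearMap.injective_iff_surjective.2 hsurjective
  refine ⟨Equiv.ofBijective e ⟨fun y z h => ?_, fun z => ⟨∑ i, z i • w i, ?_⟩⟩, he⟩
  · have hpoint : A.mulVecLin (fun j => (y j : ℝ)) = A.mulVecLin fun j => (z j : ℝ) :=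
      (he y).trans (h ▸ (he z).symm)
    exact funext fun j => Int.cast_injective (congrFun (hinjective hpoint) j)
  · apply latticePoint_injective b
    calc latticePoint b (e (∑ i, z i • w i))
        = A.mulVecLin (fun j => ((∑ i, z i • w i : Fin d → ℤ) j : ℝ)) := (he _).symm
      _ = A.mulVecLin (∑ i, (z i : ℝ) • fun j => (w i j : ℝ)) := by
          congr 1
          ext j
          simp
      _ = latticePoint b z := by simp only [map_sum, map_smul, hw', latticePoint]

variable {ι : Type*} [Fintype ι] (b : Module.Basis ι ℝ (Vec d))

lemma two_le_ang (x : Vec d) : 2 ≤ ang x := le_add_of_nonneg_left (Real.sqrt_nonneg _)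

lemma powLog_ang_pos (m α : ℝ) (x : Vec d) : 0 < powLog m α (ang x) :=
  powLog_pos m α (one_lt_two.trans_le (two_le_ang x))

lemma exists_ang_latticePoint_le_and_radius_le :
    ∃ M, ∀ z, ang (latticePoint b z) ≤ M * radius z ∧ radius z ≤ M * ang (latticePoint b z) := by
  let L : PiLp 1 (fun _ : ι => ℝ) ≃L[ℝ] EuclideanSpace ℝ (Fin d) :=
    ((WithLp.linearEquiv 1 ℝ (ι → ℝ)).trans (b.equivFun.symm.trans
      (WithLp.linearEquiv 2 ℝ (Vec d)).symm)).toContinuousLinearEquiv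
  let v (z : ι → ℤ) : PiLp 1 (fun _ : ι => ℝ) := WithLp.toLp 1 fun i => (z i : ℝ)
  have hv (z : ι → ℤ) : ‖v z‖ = l1Norm z := by
    simp [v, PiLp.norm_eq_of_L1, l1Norm, Nat.cast_natAbs]
  have hLv (z : ι → ℤ) : ‖L (v z)‖ = enorm (latticePoint b z) := by
    simp [L, v, EuclideanSpace.norm_eq, enorm, latticePoint]
  obtain ⟨K, hK, hle⟩ := L.toContinuousLinearMap.bound
  obtain ⟨K', hK', hge⟩ := L.symm.toContinuousLinearMap.bound
  refine ⟨1 + K + K', fun z => ?_⟩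
  have henorm_le : enorm (latticePoint b z) ≤ K * l1Norm z := by
    simpa only [ContinuousLinearEquiv.coe_coe, hLv, hv] using hle (v z)
  have hl1Norm_le : l1Norm z ≤ K' * enorm (latticePoint b z) := by
    simpa only [ContinuousLinearEquiv.coe_coe, L.symm_apply_apply, hLv, hv] using hge (L (v z))
  have henorm : 0 ≤ enorm (latticePoint b z) := Real.sqrt_nonneg _
  have hl1Norm : (0 : ℝ) ≤ l1Norm z := Nat.cast_nonneg _
  constructor <;> rw [ang, radius] <;> nlinarith

lemma exists_powLog_radius_le (m α : ℝ) :
    ∃ C, ∀ z, powLog m α (radius z) ≤ C * powLog m α (ang (latticePoint b z)) := by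
  obtain ⟨M, hM⟩ := exists_ang_latticePoint_le_and_radius_le b
  obtain ⟨C, hC⟩ := exists_powLog_le_mul_of_comparable m α M
  exact ⟨C, fun z => hC _ _ (two_le_radius z) (two_le_ang _) (hM z).2 (hM z).1⟩

lemma exists_powLog_ang_latticePoint_le (m α : ℝ) :
    ∃ C, ∀ z, powLog m α (ang (latticePoint b z)) ≤ C * powLog m α (radius z) := by
  obtain ⟨M, hM⟩ := exists_ang_latticePoint_le_and_radius_le b
  obtain ⟨C, hC⟩ := exists_powLog_le_mul_of_comparable m α M
  exact ⟨C, fun z => hC _ _ (two_le_ang _) (two_le_radius z) (hM z).1 (hM z).2⟩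

end LatticeCoordinates

section LatticePotentials

lemma norm_le_enorm {n : ℕ} (v : Vec n) : ‖v‖ ≤ enorm v :=
  (pi_norm_le_iff_of_nonneg (Real.sqrt_nonneg _)).2 fun i => Real.abs_le_sqrt
    (Finset.single_le_sum (f := fun j => v j ^ 2) (fun _ _ => sq_nonneg _) (Finset.mem_univ i))

lemma sqrt_sum_sq_le {X : Type*} [Fintype X] {v : X → ℝ} {B : ℝ} (hv : ∀ x, |v x| ≤ B) :
    √(∑ x, v x ^ 2) ≤ √(Fintype.card X) * B := by
  rcases isEmpty_or_nonempty X with hX | ⟨⟨x₀⟩⟩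
  · simp
  have hB : 0 ≤ B := (abs_nonneg _).trans (hv x₀)
  rw [← Real.sqrt_sq hB, ← Real.sqrt_mul (Nat.cast_nonneg _), ← nsmul_eq_mul]
  exact Real.sqrt_le_sqrt (Finset.sum_le_card_nsmul _ _ _ fun x _ => sq_le_sq.2
    ((hv x).trans (le_abs_self B)))

variable {d : ℕ} {ι : Type*} [Fintype ι] (b : Module.Basis ι ℝ (Vec d))

lemma exists_norm_comp_latticePoint_le (N : ℕ) (m α : ℝ) :
    ∃ C, ∀ (Cf : ℝ) (f : Vec d → Vec N),
      (∀ z, enorm (f (latticePoint b z)) ≤ Cf * powLog m α (ang (latticePoint b z))) →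
        ∀ z, ‖f (latticePoint b z)‖ ≤ C * Cf * powLog m α (radius z) := by
  obtain ⟨C, hC⟩ := exists_powLog_ang_latticePoint_le b m α
  refine ⟨C, fun Cf f hf z => ?_⟩
  have hCf : 0 ≤ Cf := nonneg_of_mul_nonneg_left ((Real.sqrt_nonneg _).trans (hf z))
    (powLog_ang_pos _ _ _)
  calc ‖f (latticePoint b z)‖ ≤ enorm (f (latticePoint b z)) := norm_le_enorm _
    _ ≤ Cf * powLog m α (ang (latticePoint b z)) := hf z
    _ ≤ Cf * (C * powLog m α (radius z)) := mul_le_mul_of_nonneg_left (hC z) hCf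
    _ = C * Cf * powLog m α (radius z) := by ring

variable [DecidableEq ι]

lemma hasVanishingMoments_comp_latticePoint {N p : ℕ} {f : Vec d → Vec N}
    (hmoments : ∀ j < p, ∀ (a : Fin N) (js : Fin j → Fin d),
      HasSum (fun z => f (latticePoint b z) a * ∏ m, latticePoint b z (js m)) 0) :
    HasVanishingMoments p (tensorPotential (fun z => f (latticePoint b z)) 0) := by
  intro β hβ
  have hcoordinate (z : ι → ℤ) (i : ι) : (z i : ℝ) =
      ∑ j, LinearMap.toMatrix' (b.equivFun : Vec d →ₗ[ℝ] ι → ℝ) i j * latticePoint b z j :=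
    congrFun ((equivFun_latticePoint b z).symm.trans (LinearMap.toMatrix'_mulVec _ _).symm) i
  refine Pi.hasSum.2 fun a => ?_
  simpa [tensorPotential, count, mul_comm] using
    hasSum_mul_newton_of_moments (fun j hj js => hmoments j hj a js) hcoordinate hβ

/-- The tensor potentials of the restriction of `f` to the lattice spanned by `b`, as functions of
the lattice points; away from the lattice the value is arbitrary. -/
def latticePotential {N : ℕ} (f : Vec d → Vec N) (k : ℕ) (x : Vec d) (a : Fin N)
    (σ : Fin k → ι) : ℝ :=
  tensorPotential (fun z => f (latticePoint b z)) k (Function.invFun (latticePoint b) x) σ a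

variable {b}

lemma latticePotential_latticePoint {N : ℕ} (f : Vec d → Vec N) {k : ℕ} (z : ι → ℤ) (a : Fin N)
    (σ : Fin k → ι) : latticePotential b f k (latticePoint b z) a σ =
      tensorPotential (fun y => f (latticePoint b y)) k z σ a := by
  rw [latticePotential, Function.leftInverse_invFun (latticePoint_injective b)]

lemma symmetrize_latticePotential {N p : ℕ} {q α Cf : ℝ} (hq : Fintype.card ι + p < q + 1)
    {f : Vec d → Vec N}
    (hf : ∀ z, enorm (f (latticePoint b z)) ≤ Cf * powLog (-q) α (ang (latticePoint b z)))
    (hmoments : ∀ j < p, ∀ (a : Fin N) (js : Fin j → Fin d),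
      HasSum (fun z => f (latticePoint b z) a * ∏ m, latticePoint b z (js m)) 0)
    {k : ℕ} (hk : k < p) (z : ι → ℤ) (a : Fin N) (σ : Fin k → ι) :
    symmetrize (latticePotential b f k (latticePoint b z) a) σ =
      ∑ i, (latticePotential b f (k + 1) (latticePoint b z - b i) a (Fin.snoc σ i) -
        latticePotential b f (k + 1) (latticePoint b z) a (Fin.snoc σ i)) := by
  obtain ⟨C, hC⟩ := exists_norm_comp_latticePoint_le b N (-q) α
  have hdiv := congrFun (symmetrize_tensorPotential hq (hC Cf f hf)
    (hasVanishingMoments_comp_latticePoint b hmoments) hk z σ) a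
  simp only [latticePoint_sub_basis, latticePotential_latticePoint, symmetrize]
  simpa only [symmetrize, negDiv, Pi.smul_apply, Finset.sum_apply, Pi.sub_apply] using hdiv

variable (b)

lemma exists_sqrt_sum_sq_latticePotential_le (N : ℕ) {k : ℕ} {q : ℝ} (α : ℝ)
    (hq : Fintype.card ι + k < q + 1) :
    ∃ C, ∀ (Cf : ℝ) (f : Vec d → Vec N),
      (∀ z, enorm (f (latticePoint b z)) ≤ Cf * powLog (-q) α (ang (latticePoint b z))) →
        ∀ z, √(∑ a, ∑ σ, latticePotential b f k (latticePoint b z) a σ ^ 2) ≤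
          C * (Cf * powLog (-q + k) α (ang (latticePoint b z))) := by
  obtain ⟨C₁, hC₁⟩ := exists_norm_comp_latticePoint_le b N (-q) α
  obtain ⟨C₂, hC₂⟩ := exists_norm_tensorPotential_le (ι := ι) (E := Vec N) α hq
  obtain ⟨C₃, hC₃⟩ := exists_powLog_radius_le b (-q + k) α
  refine ⟨√(Fintype.card (Fin N × (Fin k → ι))) * (C₂ * C₁ * C₃), fun Cf f hf z => ?_⟩
  have hpotential := hC₂ (C₁ * Cf) _ (hC₁ Cf f hf) z
  calc √(∑ a, ∑ σ, latticePotential b f k (latticePoint b z) a σ ^ 2)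
      = √(∑ x : Fin N × (Fin k → ι),
          latticePotential b f k (latticePoint b z) x.1 x.2 ^ 2) := by
        rw [Fintype.sum_prod_type]
    _ ≤ √(Fintype.card (Fin N × (Fin k → ι))) *
          (C₂ * (C₁ * Cf) * (C₃ * powLog (-q + k) α (ang (latticePoint b z)))) := by
        refine sqrt_sum_sq_le fun x => ?_
        have hC : 0 ≤ C₂ * (C₁ * Cf) := nonneg_of_mul_nonneg_left
          ((norm_nonneg _).trans (hpotential x.2)) (powLog_radius_pos _ _ _)
        rw [latticePotential_latticePoint]
        exact (norm_le_pi_norm _ x.1).trans ((hpotential x.2).trans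
          (mul_le_mul_of_nonneg_left (hC₃ z) hC))
    _ = _ := by ring

lemma exists_forall_sqrt_sum_sq_latticePotential_le (N p : ℕ) {q : ℝ} (α : ℝ)
    (hq : Fintype.card ι + p < q + 1) :
    ∃ C, ∀ (Cf : ℝ) (f : Vec d → Vec N),
      (∀ z, enorm (f (latticePoint b z)) ≤ Cf * powLog (-q) α (ang (latticePoint b z))) →
        ∀ k ≤ p, ∀ z, √(∑ a, ∑ σ, latticePotential b f k (latticePoint b z) a σ ^ 2) ≤
          C * (Cf * powLog (-q + k) α (ang (latticePoint b z))) := by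
  have horder (k : Fin (p + 1)) := exists_sqrt_sum_sq_latticePotential_le b N (k := k) (q := q) α
    (lt_of_le_of_lt (by gcongr; exact k.is_le) hq)
  choose C hC using horder
  obtain ⟨M, hM⟩ := (Finset.univ.image C).exists_le
  refine ⟨M, fun Cf f hf k hk z => ?_⟩
  have hCf : 0 ≤ Cf := nonneg_of_mul_nonneg_left ((Real.sqrt_nonneg _).trans (hf z))
    (powLog_ang_pos _ _ _)
  let k' : Fin (p + 1) := ⟨k, Nat.lt_succ_of_le hk⟩
  exact (hC k' Cf f hf z).trans (mul_le_mul_of_nonneg_right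
    (hM _ (Finset.mem_image_of_mem C (Finset.mem_univ k')))
    (mul_nonneg hCf (powLog_ang_pos _ _ _).le))

end LatticePotentials

theorem conversion_to_higher_order_divergence_form_general
    (d N : ℕ) (A : Matrix (Fin d) (Fin d) ℝ)
    (s : Fin d → Vec d) (hslat : ∀ i, s i ∈ Lattice d A)
    (hsind : LinearIndependent ℝ s)
    (hsspan : ∀ x ∈ Lattice d A, ∃ z : Fin d → ℤ, x = ∑ i, (z i : ℝ) • s i)
    (p : ℕ) (q : ℝ) (hq : d + p < q + 1) (α : ℝ) :
    ∃ C : ℝ, ∀ (Cf : ℝ) (f0 : Vec d → Vec N),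
      (∀ z : Fin d → ℤ,
        enorm (f0 (latticePt d A z)) ≤
          Cf * ang (latticePt d A z) ^ (-q) *
            Real.log (ang (latticePt d A z)) ^ α) →
      (∀ j : ℕ, j < p → ∀ (a : Fin N) (js : Fin j → Fin d),
        HasSum (fun z : Fin d → ℤ =>
          f0 (latticePt d A z) a * ∏ m, latticePt d A z (js m)) 0) →
      ∃ F : (k : ℕ) → Vec d → Fin N → (Fin k → Fin d) → ℝ,
        (∀ (z : Fin d → ℤ) (a : Fin N) (js : Fin 0 → Fin d),
          F 0 (latticePt d A z) a js = f0 (latticePt d A z) a) ∧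
        (∀ k : ℕ, k < p → ∀ (z : Fin d → ℤ) (a : Fin N) (σv : Fin k → Fin d),
          ((k.factorial : ℝ))⁻¹ *
              (∑ π : Equiv.Perm (Fin k), F k (latticePt d A z) a (σv ∘ π)) =
            ∑ i : Fin d,
              (F (k + 1) (latticePt d A z - s i) a (Fin.snoc σv i) -
                F (k + 1) (latticePt d A z) a (Fin.snoc σv i))) ∧
        (∀ k : ℕ, k ≤ p → ∀ z : Fin d → ℤ,
          Real.sqrt (∑ a : Fin N, ∑ σv : Fin k → Fin d,
              (F k (latticePt d A z) a σv) ^ 2) ≤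
            C * Cf * ang (latticePt d A z) ^ (-q + k) *
              Real.log (ang (latticePt d A z)) ^ α) := by
  obtain ⟨b, rfl⟩ : ∃ b : Module.Basis (Fin d) ℝ (Vec d), b = s :=
    ⟨.mk hsind (hsind.span_eq_top_of_card_eq_finrank' (by simp)).ge, Module.Basis.coe_mk _ _⟩
  obtain ⟨e, he⟩ := exists_equiv_latticePt_eq_latticePoint b hslat hsspan
  have hcard : (Fintype.card (Fin d) : ℝ) + p < q + 1 := by rwa [Fintype.card_fin]
  obtain ⟨C, hC⟩ := exists_forall_sqrt_sum_sq_latticePotential_le b N p α hcard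
  refine ⟨C, fun Cf f0 hdecay hmoments => ?_⟩
  simp only [he, mul_assoc] at hdecay hmoments ⊢
  have hdecay_b (z : Fin d → ℤ) : enorm (f0 (latticePoint b z)) ≤
      Cf * powLog (-q) α (ang (latticePoint b z)) := by
    obtain ⟨y, rfl⟩ := e.surjective z
    exact hdecay y
  have hmoments_b (j : ℕ) (hj : j < p) (a : Fin N) (js : Fin j → Fin d) :
      HasSum (fun z => f0 (latticePoint b z) a * ∏ m, latticePoint b z (js m)) 0 :=
    e.hasSum_iff.1 (hmoments j hj a js)
  refine ⟨latticePotential b f0, fun z a js => latticePotential_latticePoint f0 _ a js, ?_, ?_⟩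
  · exact fun k hk z => symmetrize_latticePotential hcard hdecay_b hmoments_b hk (e z)
  · exact fun k hk z => hC Cf f0 hdecay_b k hk (e z)

/-- Proposition: conversion to higher-order divergence
form. -/
theorem conversion_to_higher_order_divergence_form
    (d N : ℕ) (hd : 2 ≤ d)
    (A : Matrix (Fin d) (Fin d) ℝ) (hA : IsUnit A.det)
    (s : Fin d → Vec d) (hslat : ∀ i, s i ∈ Lattice d A)
    (hsind : LinearIndependent ℝ s)
    (hsspan : ∀ x ∈ Lattice d A, ∃ z : Fin d → ℤ, x = ∑ i, (z i : ℝ) • s i)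
    (p q : ℕ) (hp : 1 ≤ p) (hq : d + p < q + 1) (α : ℝ) :
    ∃ C : ℝ, ∀ (Cf : ℝ) (f0 : Vec d → Vec N),
      (∀ z : Fin d → ℤ,
        enorm (f0 (latticePt d A z)) ≤
          Cf * ang (latticePt d A z) ^ (-(q : ℝ)) *
            Real.log (ang (latticePt d A z)) ^ α) →
      (∀ j : ℕ, j < p → ∀ (a : Fin N) (js : Fin j → Fin d),
        HasSum (fun z : Fin d → ℤ =>
          f0 (latticePt d A z) a * ∏ m, latticePt d A z (js m)) 0) →
      ∃ F : (k : ℕ) → Vec d → Fin N → (Fin k → Fin d) → ℝ,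
        -- `F 0` is `f⁽⁰⁾`
        (∀ (z : Fin d → ℤ) (a : Fin N) (js : Fin 0 → Fin d),
          F 0 (latticePt d A z) a js = f0 (latticePt d A z) a) ∧
        -- `sym f⁽ᵏ⁻¹⁾ = −Div_𝒮 f⁽ᵏ⁾`
        (∀ k : ℕ, k < p → ∀ (z : Fin d → ℤ) (a : Fin N) (σv : Fin k → Fin d),
          ((k.factorial : ℝ))⁻¹ *
              (∑ π : Equiv.Perm (Fin k), F k (latticePt d A z) a (σv ∘ π)) =
            ∑ i : Fin d,
              (F (k + 1) (latticePt d A z - s i) a (Fin.snoc σv i) -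
                F (k + 1) (latticePt d A z) a (Fin.snoc σv i))) ∧
        -- decay of `f⁽ᵏ⁾`
        (∀ k : ℕ, 1 ≤ k → k ≤ p → ∀ z : Fin d → ℤ,
          Real.sqrt (∑ a : Fin N, ∑ σv : Fin k → Fin d,
              (F k (latticePt d A z) a σv) ^ 2) ≤
            C * Cf * ang (latticePt d A z) ^ (-(q : ℝ) + k) *
              Real.log (ang (latticePt d A z)) ^ α) := by
  obtain ⟨C, hC⟩ := conversion_to_higher_order_divergence_form_general d N A s hslat hsind hsspan
    p q (by exact_mod_cast hq) α
  exact ⟨C, fun Cf f0 hdecay hmoments => by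
    obtain ⟨F, hzero, hdiv, hbound⟩ := hC Cf f0 hdecay hmoments
    exact ⟨F, hzero, hdiv, fun k _ => hbound k⟩⟩

end Defect
end
end

section
/- (Green's function representation of finite differences.) Suppose the lattice operator H is stable and admits a lattice Green's function 𝒢. Let u ∈ 𝓗¹ and suppose there are c > 0 and γ > 1 with |H[u](ℓ)| ≤ c⟨ℓ⟩^{−γ} for all ℓ ∈ Λ. Then for every j ≥ 1, every tuple ρ⃗ ∈ ℛ^j, every ℓ ∈ Λ and every k ∈ {1,…,N}, the series ∑_{z∈Λ} H[u](z) · D_{ρ⃗}𝒢_k(ℓ−z) converges absolutely and equals D_{ρ⃗}u_k(ℓ), where the finite differences of 𝒢_k are taken in its argument. -/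
noncomputable section

open scoped BigOperators
open MeasureTheory Filter Topology

namespace Defect

/-!
The identity is Betti reciprocity for `H`, applied to `u` and to the reflected difference
`W x = D_ρ 𝒢_k (ℓ - x)`. Point symmetry of `C` makes `H` commute with the reflection, so `H W` is a
difference of two point masses and pairing it with `u` gives `D_ρ u_k (ℓ)`.

To move `H` from `W` to `u`, sum by parts against a logarithmic cutoff, whose increments at `z` are
`O(1 / ‖z‖)`. The boundary terms vanish in the limit because they are summable after multiplication
by `1 / ‖z‖`: `W = O(‖z‖ ^ (1 - d))` meets `D u ∈ ℓ²`, and `D W = O(‖z‖ ^ (-d))` meets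
`u = O(‖z‖ ^ (1 / 2))`, a bound which every `u ∈ 𝓗¹` satisfies. Higher differences follow by
subtracting translates of the identity.
-/

section Cutoff

variable {Λ : Type*} [NormedAddCommGroup Λ]

/-- The logarithmic cutoff `z ↦ min(1, max(0, n + 1 - log(1 + ‖z‖)))`, equal to `1` for
`1 + ‖z‖ ≤ exp n` and to `0` for `1 + ‖z‖ ≥ exp (n + 1)`. The logarithm makes its increments
`O(‖z‖⁻¹)` uniformly in `n`. -/
def logCutoff (n : ℕ) (z : Λ) : ℝ := max 0 (min 1 (n + 1 - Real.log (1 + ‖z‖)))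

lemma abs_logCutoff_le_one (n : ℕ) (z : Λ) : |logCutoff n z| ≤ 1 := by
  rw [logCutoff, abs_of_nonneg (le_max_left _ _)]
  exact max_le zero_le_one (min_le_left _ _)

lemma eventually_logCutoff_eq_one (z : Λ) : ∀ᶠ n : ℕ in atTop, logCutoff n z = 1 := by
  obtain ⟨m, hm⟩ := exists_nat_ge (Real.log (1 + ‖z‖))
  filter_upwards [eventually_ge_atTop m] with n hn
  have : (m : ℝ) ≤ n := by exact_mod_cast hn
  rw [logCutoff, min_eq_left (by linarith), max_eq_right zero_le_one]

lemma finite_support_logCutoff [ProperSpace Λ] [DiscreteTopology Λ] (n : ℕ) :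
    (Function.support (logCutoff n : Λ → ℝ)).Finite := by
  refine (isCompact_closedBall (0 : Λ) (Real.exp (n + 1))).finite_of_discrete.subset fun z hz ↦ ?_
  rw [mem_closedBall_zero_iff]
  by_contra! hlarge
  have hlog : (n : ℝ) + 1 ≤ Real.log (1 + ‖z‖) :=
    (Real.le_log_iff_exp_le (by positivity)).2 (by linarith)
  exact hz (max_eq_left ((min_le_right _ _).trans (by linarith)))

lemma abs_log_one_add_norm_add_sub_le (z a : Λ) :
    |Real.log (1 + ‖z + a‖) - Real.log (1 + ‖z‖)| ≤ ‖a‖ * (1 + ‖a‖) / (1 + ‖z‖) := by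
  have hz : 0 < 1 + ‖z‖ := by positivity
  have hza : 0 < 1 + ‖z + a‖ := by positivity
  have hupper : ‖z + a‖ ≤ ‖z‖ + ‖a‖ := norm_add_le z a
  have hlower : ‖z‖ ≤ ‖z + a‖ + ‖a‖ := by simpa using norm_sub_le (z + a) a
  rw [abs_sub_le_iff, ← Real.log_div hza.ne' hz.ne', ← Real.log_div hz.ne' hza.ne']
  refine ⟨(Real.log_le_sub_one_of_pos (by positivity)).trans ?_,
    (Real.log_le_sub_one_of_pos (by positivity)).trans ?_⟩
  · rw [div_sub_one hz.ne']
    gcongr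
    nlinarith [norm_nonneg a]
  · rw [div_sub_one hza.ne', div_le_div_iff₀ hza hz]
    have hsub : 1 + ‖z‖ - (1 + ‖z + a‖) ≤ ‖a‖ := by linarith
    have hshift : 1 + ‖z‖ ≤ (1 + ‖a‖) * (1 + ‖z + a‖) := by
      nlinarith [mul_nonneg (norm_nonneg a) (norm_nonneg (z + a))]
    calc (1 + ‖z‖ - (1 + ‖z + a‖)) * (1 + ‖z‖)
        ≤ ‖a‖ * ((1 + ‖a‖) * (1 + ‖z + a‖)) := by gcongr
      _ = ‖a‖ * (1 + ‖a‖) * (1 + ‖z + a‖) := by ring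

lemma abs_logCutoff_add_sub_le (n : ℕ) (z a : Λ) :
    |logCutoff n (z + a) - logCutoff n z| ≤ ‖a‖ * (1 + ‖a‖) / (1 + ‖z‖) := by
  have hclamp := ((LipschitzWith.id (α := ℝ)).const_min 1).const_max 0 |>.dist_le_mul
    (n + 1 - Real.log (1 + ‖z + a‖)) (n + 1 - Real.log (1 + ‖z‖))
  simp only [id_eq, Real.dist_eq, NNReal.coe_one, one_mul, sub_sub_sub_cancel_left] at hclamp
  rw [abs_sub_comm (Real.log _)] at hclamp
  exact hclamp.trans (abs_log_one_add_norm_add_sub_le z a)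

end Cutoff

section SummationByParts

lemma summable_and_tsum_sub_mul_of_finite_support {Λ : Type*} [AddCommGroup Λ] (F v : Λ → ℝ)
    (τ : Λ) (hv : (Function.support v).Finite) :
    Summable (fun z ↦ (F (z - τ) - F z) * v z) ∧ Summable (fun z ↦ F z * (v (z + τ) - v z)) ∧
    ∑' z, (F (z - τ) - F z) * v z = ∑' z, F z * (v (z + τ) - v z) := by
  have hmul (h : Λ → ℝ) : Summable fun z ↦ h z * v z :=
    summable_of_hasFiniteSupport (hv.subset (Function.support_mul_subset_right h v))
  have hshift : HasSum (fun z ↦ F z * v (z + τ)) (∑' z, F (z - τ) * v z) := by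
    simpa [Function.comp_def] using
      (Equiv.addRight τ).hasSum_iff.2 (hmul fun z ↦ F (z - τ)).hasSum
  have hleft := (hmul fun z ↦ F (z - τ)).hasSum.sub (hmul F).hasSum
  have hright := hshift.sub (hmul F).hasSum
  simp only [← sub_mul] at hleft
  simp only [← mul_sub] at hright
  exact ⟨hleft.summable, hright.summable, hleft.tsum_eq.trans hright.tsum_eq.symm⟩

lemma abs_mul_logCutoff_mul_sub_le {Λ : Type*} [NormedAddCommGroup Λ] (F v : Λ → ℝ) (n : ℕ)
    (z a : Λ) :
    |F z * (logCutoff n (z + a) * v (z + a) - logCutoff n z * v z)| ≤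
      |F z * (v (z + a) - v z)| + ‖a‖ * (1 + ‖a‖) * |F z * v (z + a) * (1 + ‖z‖)⁻¹| := by
  have hleibniz : F z * (logCutoff n (z + a) * v (z + a) - logCutoff n z * v z) =
      logCutoff n z * (F z * (v (z + a) - v z)) +
        (logCutoff n (z + a) - logCutoff n z) * (F z * v (z + a)) := by ring
  have hincr := mul_le_mul_of_nonneg_right (abs_logCutoff_add_sub_le n z a)
    (abs_nonneg (F z * v (z + a)))
  rw [hleibniz]
  refine (abs_add_le _ _).trans (add_le_add ?_ ?_)
  · rw [abs_mul]
    exact mul_le_of_le_one_left (abs_nonneg _) (abs_logCutoff_le_one n z)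
  · rw [abs_mul, abs_mul _ (1 + ‖z‖)⁻¹, abs_of_nonneg (by positivity : 0 ≤ (1 + ‖z‖)⁻¹)]
    exact hincr.trans_eq (by ring)

/- The boundary terms left over when `v` is cut off at radius `exp n` are controlled by
`F a z * v a (z + τ a) / (1 + ‖z‖)` and vanish by dominated convergence. -/
theorem tsum_sum_sub_mul_eq_tsum_sum_mul_sub {Λ κ : Type*} [NormedAddCommGroup Λ]
    [ProperSpace Λ] [DiscreteTopology Λ] (s : Finset κ) (τ : κ → Λ) (F v : κ → Λ → ℝ)
    (hdiv : Summable fun z ↦ ∑ a ∈ s, (F a (z - τ a) - F a z) * v a z)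
    (hgrad : ∀ a ∈ s, Summable fun z ↦ F a z * (v a (z + τ a) - v a z))
    (hbdry : ∀ a ∈ s, Summable fun z ↦ F a z * v a (z + τ a) * (1 + ‖z‖)⁻¹) :
    ∑' z, ∑ a ∈ s, (F a (z - τ a) - F a z) * v a z =
      ∑' z, ∑ a ∈ s, F a z * (v a (z + τ a) - v a z) := by
  let η : ℕ → Λ → ℝ := logCutoff
  have hcut (n : ℕ) : ∑' z, ∑ a ∈ s, (F a (z - τ a) - F a z) * (η n z * v a z) =
      ∑' z, ∑ a ∈ s, F a z * (η n (z + τ a) * v a (z + τ a) - η n z * v a z) := by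
    have hparts (a : κ) := summable_and_tsum_sub_mul_of_finite_support (F a)
      (fun z ↦ η n z * v a z) (τ a)
      ((finite_support_logCutoff n).subset (Function.support_mul_subset_left _ _))
    rw [Summable.tsum_finsetSum fun a _ ↦ (hparts a).1,
      Summable.tsum_finsetSum fun a _ ↦ (hparts a).2.1]
    exact Finset.sum_congr rfl fun a _ ↦ (hparts a).2.2
  have hη (z : Λ) : Tendsto (η · z) atTop (𝓝 1) :=
    tendsto_const_nhds.congr' ((eventually_logCutoff_eq_one z).mono fun _ h ↦ h.symm)
  have hdiv_lim : Tendsto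
      (fun n ↦ ∑' z, ∑ a ∈ s, (F a (z - τ a) - F a z) * (η n z * v a z)) atTop
      (𝓝 (∑' z, ∑ a ∈ s, (F a (z - τ a) - F a z) * v a z)) := by
    refine tendsto_tsum_of_dominated_convergence hdiv.abs (fun z ↦ ?_) (.of_forall fun n z ↦ ?_)
    · exact tendsto_finsetSum _ fun a _ ↦ by simpa using ((hη z).mul_const (v a z)).const_mul _
    · simp only [mul_left_comm _ (η n z), ← Finset.mul_sum, norm_mul, Real.norm_eq_abs]
      exact mul_le_of_le_one_left (abs_nonneg _) (abs_logCutoff_le_one n z)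
  have hgrad_lim : Tendsto
      (fun n ↦ ∑' z, ∑ a ∈ s, F a z * (η n (z + τ a) * v a (z + τ a) - η n z * v a z)) atTop
      (𝓝 (∑' z, ∑ a ∈ s, F a z * (v a (z + τ a) - v a z))) := by
    refine tendsto_tsum_of_dominated_convergence
      (summable_sum fun a ha ↦
        (hgrad a ha).abs.add ((hbdry a ha).abs.mul_left (‖τ a‖ * (1 + ‖τ a‖))))
      (fun z ↦ ?_) (.of_forall fun n z ↦ ?_)
    · exact tendsto_finsetSum _ fun a _ ↦ by
        simpa using (((hη (z + τ a)).mul_const (v a (z + τ a))).sub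
          ((hη z).mul_const (v a z))).const_mul (F a z)
    · exact (norm_sum_le _ _).trans
        (Finset.sum_le_sum fun a _ ↦ abs_mul_logCutoff_mul_sub_le (F a) (v a) n z (τ a))
  exact tendsto_nhds_unique (by simpa only [hcut] using hdiv_lim) hgrad_lim

end SummationByParts

section LatticeAsymptotics

open Asymptotics

lemma isTheta_norm_add_rpow {Λ : Type*} [NormedAddCommGroup Λ] [ProperSpace Λ]
    [DiscreteTopology Λ] (a : Λ) (p : ℝ) :
    (fun z : Λ ↦ ‖z + a‖ ^ p) =Θ[cofinite] fun z ↦ ‖z‖ ^ p := by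
  have hconst : (fun _ : Λ ↦ a) =o[cofinite] fun z ↦ z := by
    rw [← cocompact_eq_cofinite, ← Metric.cobounded_eq_cocompact]
    exact isLittleO_const_id_cobounded a
  have hnorm : (fun z : Λ ↦ ‖z + a‖) =Θ[cofinite] fun z ↦ ‖z‖ :=
    hconst.right_isTheta_add'.symm.norm_left.norm_right
  exact hnorm.rpow (.of_forall fun _ ↦ norm_nonneg _) (.of_forall fun _ ↦ norm_nonneg _)

lemma isBigO_norm_rpow_comp_add {Λ : Type*} [NormedAddCommGroup Λ] [ProperSpace Λ]
    [DiscreteTopology Λ] {f : Λ → ℝ} {p : ℝ} (hf : f =O[cofinite] fun z ↦ ‖z‖ ^ p) (a : Λ) :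
    (fun z ↦ f (z + a)) =O[cofinite] fun z ↦ ‖z‖ ^ p :=
  (hf.comp_tendsto (add_left_injective a).tendsto_cofinite).trans
    (isTheta_norm_add_rpow a p).isBigO

lemma isBigO_norm_rpow_comp_const_sub {Λ : Type*} [NormedAddCommGroup Λ] [ProperSpace Λ]
    [DiscreteTopology Λ] {f : Λ → ℝ} {p : ℝ} (hf : f =O[cofinite] fun z ↦ ‖z‖ ^ p) (a : Λ) :
    (fun z ↦ f (a - z)) =O[cofinite] fun z ↦ ‖z‖ ^ p := by
  refine (hf.comp_tendsto (sub_right_injective (b := a)).tendsto_cofinite).trans ?_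
  refine .congr_left (isTheta_norm_add_rpow (-a) p).isBigO fun z ↦ ?_
  rw [Function.comp_apply, norm_sub_rev, sub_eq_add_neg]

lemma isBigO_one_add_norm_inv {Λ : Type*} [NormedAddCommGroup Λ] :
    (fun z : Λ ↦ (1 + ‖z‖)⁻¹) =O[cofinite] fun z ↦ ‖z‖ ^ (-1 : ℝ) := by
  refine .of_bound 1 ((eventually_cofinite_ne (0 : Λ)).mono fun z hz ↦ ?_)
  have : 0 < ‖z‖ := norm_pos_iff.2 hz
  rw [one_mul, Real.rpow_neg_one, Real.norm_of_nonneg (by positivity),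
    Real.norm_of_nonneg (by positivity)]
  gcongr
  linarith

lemma isBigO_mul_norm_rpow {Λ : Type*} [NormedAddCommGroup Λ] {f g : Λ → ℝ} {p q : ℝ}
    (hf : f =O[cofinite] fun z ↦ ‖z‖ ^ p) (hg : g =O[cofinite] fun z ↦ ‖z‖ ^ q) :
    (fun z ↦ f z * g z) =O[cofinite] fun z ↦ ‖z‖ ^ (p + q) := by
  refine (hf.mul hg).congr' .rfl ((eventually_cofinite_ne (0 : Λ)).mono fun z hz ↦ ?_)
  exact (Real.rpow_add (norm_pos_iff.2 hz) p q).symm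

lemma norm_intCast_pi {ι : Type*} [Fintype ι] (z : ι → ℤ) : ‖(fun i ↦ (z i : ℝ))‖ = ‖z‖ := by
  simp only [Pi.norm_def]
  congr 1

lemma summable_int_norm_rpow {d : ℕ} {p : ℝ} (hp : p < -d) :
    Summable fun z : Fin d → ℤ ↦ ‖z‖ ^ p := by
  let L := Submodule.span ℤ (Set.range (Pi.basisFun ℝ (Fin d)))
  have hmem (z : Fin d → ℤ) : (fun i ↦ (z i : ℝ)) ∈ L := by
    rw [show (fun i ↦ (z i : ℝ)) = ∑ i, z i • Pi.basisFun ℝ (Fin d) i by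
      ext j; simp [Finset.sum_apply, Pi.single_apply]]
    exact Submodule.sum_mem _ fun i _ ↦ L.smul_mem _ (Submodule.subset_span ⟨i, rfl⟩)
  have hinj : Function.Injective fun z : Fin d → ℤ ↦ (⟨_, hmem z⟩ : L) := fun x y hxy ↦
    funext fun i ↦ Int.cast_injective (congrFun (congrArg Subtype.val hxy) i)
  have hrank : Module.finrank ℤ L = d := by simp [ZLattice.rank ℝ L]
  refine ((ZLattice.summable_norm_rpow L p (by rwa [hrank])).comp_injective hinj).congr fun z ↦ ?_
  rw [← norm_intCast_pi]
  rfl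

lemma summable_of_isBigO_norm_rpow {d : ℕ} {f : (Fin d → ℤ) → ℝ} {p : ℝ} (hp : p < -d)
    (hf : f =O[cofinite] fun z ↦ ‖z‖ ^ p) : Summable f :=
  summable_of_isBigO (summable_int_norm_rpow hp) hf

lemma summable_mul_of_summable_sq {α : Type*} {f g : α → ℝ} (hf : Summable fun z ↦ f z ^ 2)
    (hg : Summable fun z ↦ g z ^ 2) : Summable fun z ↦ f z * g z := by
  refine .of_norm_bounded (hf.add hg) fun z ↦ ?_
  rw [Real.norm_eq_abs, abs_le]
  constructor <;> nlinarith [sq_nonneg (f z + g z), sq_nonneg (f z - g z)]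

end LatticeAsymptotics

section Growth

/-- The directions `t` along which the increments of `g` are square-summable. -/
def sqSummableDirections {Λ : Type*} [AddCommGroup Λ] (g : Λ → ℝ) : AddSubgroup Λ where
  carrier := {t | Summable fun z ↦ (g (z + t) - g z) ^ 2}
  zero_mem' := by simp [summable_zero]
  add_mem' {s t} hs ht := by
    refine .of_nonneg_of_le (fun _ ↦ sq_nonneg _) (fun z ↦ ?_)
      ((hs.add ((Equiv.addRight s).summable_iff.2 ht)).mul_left 2)
    calc (g (z + (s + t)) - g z) ^ 2
        = ((g (z + s) - g z) + (g (z + s + t) - g (z + s))) ^ 2 := by rw [← add_assoc]; ring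
      _ ≤ 2 * ((g (z + s) - g z) ^ 2 + (g (z + s + t) - g (z + s)) ^ 2) := add_sq_le
  neg_mem' {t} ht := ((Equiv.addRight (-t)).summable_iff.2 ht).congr fun z ↦ by
    simp only [Function.comp_apply, Equiv.coe_addRight, neg_add_cancel_right]
    exact sub_sq_comm _ _

lemma mem_sqSummableDirections {Λ : Type*} [AddCommGroup Λ] {g : Λ → ℝ} {t : Λ} :
    t ∈ sqSummableDirections g ↔ Summable fun z ↦ (g (z + t) - g z) ^ 2 := Iff.rfl

/- Cauchy–Schwarz along the path `z, z + t, …, z + n • t`. -/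
lemma abs_add_nsmul_sub_le {Λ : Type*} [AddCommGroup Λ] [IsAddTorsionFree Λ] {g : Λ → ℝ} {t : Λ}
    (ht : t ≠ 0) (hg : t ∈ sqSummableDirections g) (n : ℕ) (z : Λ) :
    |g (z + n • t) - g z| ≤ √n * √(∑' y, (g (y + t) - g y) ^ 2) := by
  have hpath : Function.Injective fun m : ℕ ↦ z + m • t :=
    (add_right_injective z).comp (injective_nsmul_iff_not_isOfFinAddOrder.2
      (not_isOfFinAddOrder_of_isAddTorsionFree ht))
  have htelescope : g (z + n • t) - g z =
      ∑ m ∈ Finset.range n, (g (z + m • t + t) - g (z + m • t)) := by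
    simpa [succ_nsmul, add_assoc] using (Finset.sum_range_sub (fun m ↦ g (z + m • t)) n).symm
  rw [← Real.sqrt_mul n.cast_nonneg]
  refine Real.abs_le_sqrt ?_
  calc (g (z + n • t) - g z) ^ 2
      ≤ n * ∑ m ∈ Finset.range n, (g (z + m • t + t) - g (z + m • t)) ^ 2 := by
        rw [htelescope]
        exact sq_sum_le_card_mul_sum_sq.trans_eq (by rw [Finset.card_range])
    _ ≤ n * ∑' y, (g (y + t) - g y) ^ 2 := by
        gcongr
        exact ((hg.comp_injective hpath).sum_le_tsum _ fun _ _ ↦ sq_nonneg _).trans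
          (tsum_comp_le_tsum_of_inj hg (fun _ ↦ sq_nonneg _) hpath)

lemma abs_add_zsmul_sub_le {Λ : Type*} [AddCommGroup Λ] [IsAddTorsionFree Λ] {g : Λ → ℝ} {t : Λ}
    (ht : t ≠ 0) (hg : t ∈ sqSummableDirections g) (n : ℤ) (z : Λ) :
    |g (z + n • t) - g z| ≤ √|(n : ℝ)| * √(∑' y, (g (y + t) - g y) ^ 2) := by
  obtain ⟨m, rfl | rfl⟩ := n.eq_nat_or_neg
  · simpa using abs_add_nsmul_sub_le ht hg m z
  · have hback := abs_add_nsmul_sub_le ht hg m (z + -(m : ℤ) • t)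
    rw [abs_sub_comm] at hback
    simpa using hback

lemma abs_sub_zero_le_of_unit_directions {d : ℕ} {g : (Fin d → ℤ) → ℝ}
    (hg : ∀ i, Pi.single i 1 ∈ sqSummableDirections g) (z : Fin d → ℤ) :
    |g z - g 0| ≤ (∑ i, √(∑' y, (g (y + Pi.single i 1) - g y) ^ 2)) * √‖z‖ := by
  let K (i : Fin d) : ℝ := √(∑' y, (g (y + Pi.single i 1) - g y) ^ 2)
  suffices hpartial : ∀ s : Finset (Fin d),
      |g (∑ i ∈ s, z i • Pi.single i 1) - g 0| ≤ (∑ i ∈ s, K i) * √‖z‖ by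
    have hz : ∑ i, z i • (Pi.single i 1 : Fin d → ℤ) = z := by
      ext j; simp [Finset.sum_apply, Pi.single_apply]
    simpa only [hz] using hpartial Finset.univ
  intro s
  induction s using Finset.induction_on with
  | empty => simp
  | insert a s ha ih =>
    rw [Finset.sum_insert ha, Finset.sum_insert ha, add_comm (z a • _), add_mul]
    have hcoord : |(z a : ℝ)| ≤ ‖z‖ := norm_le_pi_norm z a
    refine (abs_sub_le _ (g (∑ i ∈ s, z i • Pi.single i 1)) _).trans (add_le_add ?_ ih)
    refine (abs_add_zsmul_sub_le (by simp) (hg a) (z a) _).trans ?_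
    rw [mul_comm]
    exact mul_le_mul_of_nonneg_left (Real.sqrt_le_sqrt hcoord) (Real.sqrt_nonneg _)

lemma isBigO_norm_rpow_half_of_unit_directions {d : ℕ} {g : (Fin d → ℤ) → ℝ}
    (hg : ∀ i, Pi.single i 1 ∈ sqSummableDirections g) :
    g =O[cofinite] fun z ↦ ‖z‖ ^ (1 / 2 : ℝ) := by
  have hosc : (fun z ↦ g z - g 0) =O[cofinite] fun z ↦ ‖z‖ ^ (1 / 2 : ℝ) := by
    simp only [← Real.sqrt_eq_rpow]
    exact (Asymptotics.IsBigO.of_norm_le (abs_sub_zero_le_of_unit_directions hg)).trans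
      (Asymptotics.isBigO_const_mul_self _ _ _)
  have hconst : (fun _ ↦ g 0) =O[cofinite] fun z : Fin d → ℤ ↦ ‖z‖ ^ (1 / 2 : ℝ) := by
    refine .of_bound |g 0| ((eventually_cofinite_ne 0).mono fun z hz ↦ ?_)
    obtain ⟨i, hi⟩ := Function.ne_iff.1 hz
    have hone : 1 ≤ ‖z‖ := (by exact_mod_cast Int.one_le_abs hi : (1 : ℝ) ≤ |(z i : ℝ)|).trans
      (norm_le_pi_norm z i)
    rw [Real.norm_of_nonneg (by positivity : 0 ≤ ‖z‖ ^ (1 / 2 : ℝ))]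
    exact le_mul_of_one_le_right (abs_nonneg _) (Real.one_le_rpow hone (by norm_num))
  simpa using hosc.add hconst

end Growth

section LatticeEmbedding

variable {d : ℕ} (A : Matrix (Fin d) (Fin d) ℝ)

/-- `latticePt d A` as an additive homomorphism `ℤ^d → ℝ^d`. -/
def latticeHom : (Fin d → ℤ) →+ Vec d :=
  AddMonoidHom.mk' (latticePt d A) fun y z ↦ by
    ext i; simp [latticePt, mul_add, Finset.sum_add_distrib]

lemma latticePt_add (y z : Fin d → ℤ) :
    latticePt d A (y + z) = latticePt d A y + latticePt d A z := map_add (latticeHom A) y z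

lemma latticePt_sub (y z : Fin d → ℤ) :
    latticePt d A (y - z) = latticePt d A y - latticePt d A z := map_sub (latticeHom A) y z

lemma latticePt_sum_zsmul {ι : Type*} (s : Finset ι) (c : ι → ℤ) (t : ι → Fin d → ℤ) :
    latticePt d A (∑ i ∈ s, c i • t i) = ∑ i ∈ s, c i • latticePt d A (t i) := by
  change latticeHom A _ = ∑ i ∈ s, c i • latticeHom A (t i)
  simp only [map_sum, map_zsmul]

variable {A}

lemma exists_norm_le_mul_norm_latticePt (hA : IsUnit A.det) :
    ∃ K : ℝ, 0 < K ∧ ∀ z : Fin d → ℤ, ‖z‖ ≤ K * ‖latticePt d A z‖ := by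
  have hker : LinearMap.ker A.mulVecLin = ⊥ :=
    LinearMap.ker_eq_bot.2 <|
      Matrix.mulVec_injective_of_isUnit ((Matrix.isUnit_iff_isUnit_det A).2 hA)
  obtain ⟨K, hK, hanti⟩ := A.mulVecLin.exists_antilipschitzWith hker
  refine ⟨K, hK, fun z ↦ ?_⟩
  rw [← norm_intCast_pi]
  exact hanti.le_mul_norm (map_zero _) _

lemma latticePt_injective (hA : IsUnit A.det) : Function.Injective (latticePt d A) := by
  obtain ⟨K, -, hbound⟩ := exists_norm_le_mul_norm_latticePt hA
  refine (injective_iff_map_eq_zero (latticeHom A)).2 fun z hz ↦ norm_le_zero_iff.1 ?_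
  simpa [show latticePt d A z = 0 from hz] using hbound z

lemma abs_le_enorm {n : ℕ} (v : Vec n) (i : Fin n) : |v i| ≤ enorm v :=
  Real.abs_le_sqrt (Finset.single_le_sum (fun i _ ↦ sq_nonneg (v i)) (Finset.mem_univ i))

lemma norm_le_ang {n : ℕ} (v : Vec n) : ‖v‖ ≤ ang v := by
  have henorm : 0 ≤ enorm v := Real.sqrt_nonneg _
  have hnorm : ‖v‖ ≤ enorm v := (pi_norm_le_iff_of_nonneg henorm).2 (abs_le_enorm v)
  exact hnorm.trans (le_add_of_nonneg_right zero_le_two)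

lemma isBigO_ang_latticePt_rpow (hA : IsUnit A.det) {p : ℝ} (hp : p ≤ 0) :
    (fun z ↦ ang (latticePt d A z) ^ p) =O[cofinite] fun z ↦ ‖z‖ ^ p := by
  obtain ⟨K, hK, hbound⟩ := exists_norm_le_mul_norm_latticePt hA
  refine .of_bound (K⁻¹ ^ p) ((eventually_cofinite_ne 0).mono fun z hz ↦ ?_)
  have hz' : 0 < ‖z‖ := norm_pos_iff.2 hz
  have hang : K⁻¹ * ‖z‖ ≤ ang (latticePt d A z) :=
    ((inv_mul_le_iff₀ hK).2 (hbound z)).trans (norm_le_ang _)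
  have hang_nonneg : 0 ≤ ang (latticePt d A z) := hang.trans' (by positivity)
  rw [Real.norm_of_nonneg (by positivity), Real.norm_of_nonneg (by positivity),
    ← Real.mul_rpow (by positivity) hz'.le]
  exact Real.rpow_le_rpow_of_nonpos (by positivity) hang hp

lemma isBigO_of_le_mul_ang_latticePt_rpow (hA : IsUnit A.det) {p c : ℝ} (hp : p ≤ 0)
    {f : (Fin d → ℤ) → ℝ} (hf : ∀ z, |f z| ≤ c * ang (latticePt d A z) ^ p) :
    f =O[cofinite] fun z ↦ ‖z‖ ^ p :=
  (Asymptotics.IsBigO.of_norm_le hf).trans ((isBigO_ang_latticePt_rpow hA hp).const_mul_left c)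

variable {N : ℕ} {R : Finset (Vec d)} {u : Vec d → Vec N}

lemma summable_sq_D1_of_inH1 (hu : InH1 A R u) {ρ : Vec d} (hρ : ρ ∈ R) (i : Fin N) :
    Summable fun z ↦ D1 ρ u (latticePt d A z) i ^ 2 := by
  refine .of_nonneg_of_le (fun _ ↦ sq_nonneg _) (fun z ↦ ?_) hu
  calc D1 ρ u (latticePt d A z) i ^ 2
      ≤ enorm (D1 ρ u (latticePt d A z)) ^ 2 :=
        sq_le_sq' (neg_le_of_abs_le (abs_le_enorm _ i)) (le_of_abs_le (abs_le_enorm _ i))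
    _ ≤ Dnorm1Sq R u (latticePt d A z) :=
        Finset.single_le_sum (f := fun ρ ↦ enorm (D1 ρ u (latticePt d A z)) ^ 2)
          (fun _ _ ↦ sq_nonneg _) hρ

lemma isBigO_norm_rpow_half_of_inH1 (hA : IsUnit A.det) (hRlat : ∀ ρ ∈ R, ρ ∈ Lattice d A)
    (hRspan : ∀ x ∈ Lattice d A, ∃ c : Vec d → ℤ, x = ∑ ρ ∈ R, (c ρ : ℝ) • ρ)
    (hu : InH1 A R u) (i : Fin N) :
    (fun z ↦ u (latticePt d A z) i) =O[cofinite] fun z ↦ ‖z‖ ^ (1 / 2 : ℝ) := by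
  refine isBigO_norm_rpow_half_of_unit_directions fun m ↦ ?_
  choose! r hr using hRlat
  have hdir (ρ : Vec d) (hρ : ρ ∈ R) :
      r ρ ∈ sqSummableDirections fun z ↦ u (latticePt d A z) i := by
    refine mem_sqSummableDirections.2 ((summable_sq_D1_of_inH1 hu hρ i).congr fun z ↦ ?_)
    rw [latticePt_add, hr ρ hρ]
    rfl
  obtain ⟨c, hc⟩ := hRspan (latticePt d A (Pi.single m 1)) ⟨_, rfl⟩
  have hspan : Pi.single m 1 = ∑ ρ ∈ R, c ρ • r ρ := by
    refine latticePt_injective hA (hc.trans ?_)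
    rw [latticePt_sum_zsmul]
    exact Finset.sum_congr rfl fun ρ hρ ↦ by rw [hr ρ hρ, Int.cast_smul_eq_zsmul]
  rw [hspan]
  exact sum_mem fun ρ hρ ↦ zsmul_mem (hdir ρ hρ) (c ρ)

end LatticeEmbedding

section IteratedDifferences

lemma Dmulti_zero {d : ℕ} {M : Type} [AddCommGroup M] [Module ℝ M] (ρs : Fin 0 → Vec d)
    (u : Vec d → M) : Dmulti ρs u = u := by
  ext x
  simp [Dmulti, Finset.univ_unique, Finset.sum_eq_zero]

lemma Dmulti_succ {d j : ℕ} {M : Type} [AddCommGroup M] [Module ℝ M] (ρs : Fin (j + 1) → Vec d)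
    (u : Vec d → M) : Dmulti ρs u = D1 (ρs 0) (Dmulti (Fin.tail ρs) u) := by
  ext x
  have hzero : (0 : Fin (j + 1)) ∉ Finset.univ.image Fin.succ := by simp
  have hinj : Function.Injective (Finset.image (Fin.succ (n := j))) :=
    Finset.image_injective (Fin.succ_injective j)
  have huniv : (Finset.univ : Finset (Fin (j + 1))) = insert 0 (Finset.univ.image Fin.succ) := by
    ext m; cases m using Fin.cases <;> simp
  have hcard (S : Finset (Fin j)) : (S.image Fin.succ).card = S.card :=
    S.card_image_of_injective (Fin.succ_injective j)
  have hsum (S : Finset (Fin j)) : ∑ i ∈ S.image Fin.succ, ρs i = ∑ i ∈ S, Fin.tail ρs i :=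
    Finset.sum_image (Fin.succ_injective j).injOn
  have hnotMem (S : Finset (Fin j)) : (0 : Fin (j + 1)) ∉ S.image Fin.succ := by simp
  have hsign (S : Finset (Fin j)) : (-1 : ℝ) ^ (j + 1 - S.card) = -(-1) ^ (j - S.card) := by
    rw [Nat.sub_add_comm (by simpa using S.card_le_univ), pow_succ, mul_neg_one]
  simp only [Dmulti, D1]
  rw [← Finset.powerset_univ, huniv, Finset.sum_powerset_insert hzero, Finset.powerset_image,
    Finset.sum_image hinj.injOn, Finset.sum_image hinj.injOn, Finset.powerset_univ]
  simp only [Finset.card_insert_of_notMem (hnotMem _), Finset.sum_insert (hnotMem _), hcard, hsum,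
    hsign, Nat.add_sub_add_right, neg_smul, Finset.sum_neg_distrib, add_assoc]
  rw [neg_add_eq_sub]

lemma Dmulti_one {d : ℕ} {M : Type} [AddCommGroup M] [Module ℝ M] (ρs : Fin 1 → Vec d)
    (u : Vec d → M) : Dmulti ρs u = D1 (ρs 0) u := by
  rw [Dmulti_succ, Dmulti_zero]

end IteratedDifferences

section SummationByPartsForHop

variable {d N : ℕ} {R : Finset (Vec d)} {C : Vec d → Vec d → Fin N → Fin N → ℝ}
  {A : Matrix (Fin d) (Fin d) ℝ} {u v : Vec d → Vec N}

/-- The stress `∑_ρ C_{σρ} D_ρ u` conjugate to the strain `D_σ u`. -/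
def stress (R : Finset (Vec d)) (C : Vec d → Vec d → Fin N → Fin N → ℝ) (u : Vec d → Vec N)
    (σ x : Vec d) : Vec N :=
  ∑ ρ ∈ R, mulV (C σ ρ) (D1 ρ u x)

/-- The density `∑_{σ,ρ} D_σ v · C_{σρ} D_ρ u` of the bilinear form associated with `Hop`. -/
def energyDensity (R : Finset (Vec d)) (C : Vec d → Vec d → Fin N → Fin N → ℝ)
    (u v : Vec d → Vec N) (x : Vec d) : ℝ :=
  ∑ σ ∈ R, dotV (stress R C u σ x) (D1 σ v x)

lemma Hop_eq_sum_stress (u : Vec d → Vec N) (x : Vec d) :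
    Hop d N R C u x = ∑ σ ∈ R, (stress R C u σ (x - σ) - stress R C u σ x) := by
  simp only [Hop, stress, Finset.sum_sub_distrib]

lemma dotV_mulV_comm {M M' : Fin N → Fin N → ℝ} (hM : ∀ i j, M i j = M' j i) (x y : Vec N) :
    dotV (mulV M x) y = dotV (mulV M' y) x := by
  simp only [dotV, mulV, Finset.sum_mul]
  rw [Finset.sum_comm]
  exact Finset.sum_congr rfl fun j _ ↦ Finset.sum_congr rfl fun i _ ↦ by rw [hM]; ring

lemma energyDensity_comm (hCsym : ∀ σ ρ i j, C σ ρ i j = C ρ σ j i) (u v : Vec d → Vec N)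
    (x : Vec d) : energyDensity R C u v x = energyDensity R C v u x := by
  have hexpand (u v : Vec d → Vec N) : energyDensity R C u v x =
      ∑ σ ∈ R, ∑ ρ ∈ R, dotV (mulV (C σ ρ) (D1 ρ u x)) (D1 σ v x) := by
    simp only [energyDensity, stress, dotV, Finset.sum_apply, Finset.sum_mul]
    exact Finset.sum_congr rfl fun σ _ ↦ Finset.sum_comm
  rw [hexpand, hexpand, Finset.sum_comm]
  exact Finset.sum_congr rfl fun ρ _ ↦ Finset.sum_congr rfl fun σ _ ↦
    dotV_mulV_comm (hCsym σ ρ) _ _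

lemma summable_stress_mul {α : Type*} {p : α → Vec d} {w : α → ℝ}
    (h : ∀ ρ ∈ R, ∀ j, Summable fun a ↦ D1 ρ u (p a) j * w a) (σ : Vec d) (i : Fin N) :
    Summable fun a ↦ stress R C u σ (p a) i * w a := by
  have hexpand (a : α) : stress R C u σ (p a) i * w a =
      ∑ ρ ∈ R, ∑ j, C σ ρ i j * (D1 ρ u (p a) j * w a) := by
    simp only [stress, mulV, Finset.sum_apply, Finset.sum_mul, mul_assoc]
  simp only [hexpand]
  exact summable_sum fun ρ hρ ↦ summable_sum fun j _ ↦ (h ρ hρ j).mul_left _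

lemma tsum_dotV_Hop_eq_tsum_energyDensity (hRlat : ∀ ρ ∈ R, ρ ∈ Lattice d A)
    (hHop : Summable fun z ↦ dotV (Hop d N R C u (latticePt d A z)) (v (latticePt d A z)))
    (hgrad : ∀ ρ ∈ R, ∀ σ ∈ R, ∀ j i, Summable fun z ↦
      D1 ρ u (latticePt d A z) j * D1 σ v (latticePt d A z) i)
    (hbdry : ∀ ρ ∈ R, ∀ σ ∈ R, ∀ j i, Summable fun z ↦
      D1 ρ u (latticePt d A z) j * (v (latticePt d A z + σ) i * (1 + ‖z‖)⁻¹)) :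
    ∑' z, dotV (Hop d N R C u (latticePt d A z)) (v (latticePt d A z)) =
      ∑' z, energyDensity R C u v (latticePt d A z) := by
  choose! r hr using hRlat
  have hr' {a : Vec d × Fin N} (ha : a ∈ R ×ˢ Finset.univ) : latticePt d A (r a.1) = a.1 :=
    hr a.1 (Finset.mem_product.1 ha).1
  have hdiv (z : Fin d → ℤ) : dotV (Hop d N R C u (latticePt d A z)) (v (latticePt d A z)) =
      ∑ a ∈ R ×ˢ Finset.univ, (stress R C u a.1 (latticePt d A (z - r a.1)) a.2 -
        stress R C u a.1 (latticePt d A z) a.2) * v (latticePt d A z) a.2 := by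
    rw [Finset.sum_product_right, dotV]
    refine Finset.sum_congr rfl fun i _ ↦ ?_
    rw [Hop_eq_sum_stress, Finset.sum_apply, Finset.sum_mul]
    exact Finset.sum_congr rfl fun σ hσ ↦ by rw [latticePt_sub, hr σ hσ, Pi.sub_apply]
  have henergy (z : Fin d → ℤ) : energyDensity R C u v (latticePt d A z) =
      ∑ a ∈ R ×ˢ Finset.univ, stress R C u a.1 (latticePt d A z) a.2 *
        (v (latticePt d A (z + r a.1)) a.2 - v (latticePt d A z) a.2) := by
    rw [Finset.sum_product]
    exact Finset.sum_congr rfl fun σ hσ ↦ by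
      simp only [dotV, D1, Pi.sub_apply, latticePt_add, hr σ hσ]
  simp only [hdiv] at hHop ⊢
  simp only [henergy]
  refine tsum_sum_sub_mul_eq_tsum_sum_mul_sub (R ×ˢ Finset.univ) (fun a ↦ r a.1)
    (fun a z ↦ stress R C u a.1 (latticePt d A z) a.2) (fun a z ↦ v (latticePt d A z) a.2)
    hHop (fun a ha ↦ ?_) (fun a ha ↦ ?_)
  · simp only [latticePt_add, hr' ha]
    exact summable_stress_mul
      (fun ρ hρ j ↦ hgrad ρ hρ a.1 (Finset.mem_product.1 ha).1 j a.2) a.1 a.2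
  · simp only [latticePt_add, hr' ha, mul_assoc]
    exact summable_stress_mul
      (fun ρ hρ j ↦ hbdry ρ hρ a.1 (Finset.mem_product.1 ha).1 j a.2) a.1 a.2

theorem tsum_dotV_Hop_comm (hd : 0 < d) (hA : IsUnit A.det) (hRlat : ∀ ρ ∈ R, ρ ∈ Lattice d A)
    (hRspan : ∀ x ∈ Lattice d A, ∃ c : Vec d → ℤ, x = ∑ ρ ∈ R, (c ρ : ℝ) • ρ)
    (hCsym : ∀ σ ρ i j, C σ ρ i j = C ρ σ j i) (hu : InH1 A R u)
    (hv : ∀ i, (fun z ↦ v (latticePt d A z) i) =O[cofinite] fun z ↦ ‖z‖ ^ (1 - d : ℝ))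
    (hDv : ∀ σ ∈ R, ∀ i,
      (fun z ↦ D1 σ v (latticePt d A z) i) =O[cofinite] fun z ↦ ‖z‖ ^ (-d : ℝ))
    (hHu : Summable fun z ↦ dotV (Hop d N R C u (latticePt d A z)) (v (latticePt d A z)))
    (hHv : Summable fun z ↦ dotV (Hop d N R C v (latticePt d A z)) (u (latticePt d A z))) :
    ∑' z, dotV (Hop d N R C u (latticePt d A z)) (v (latticePt d A z)) =
      ∑' z, dotV (Hop d N R C v (latticePt d A z)) (u (latticePt d A z)) := by
  have hd' : (0 : ℝ) < d := by exact_mod_cast hd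
  have hshift {w : Vec d → Vec N} {p : ℝ} {i : Fin N}
      (hw : (fun z ↦ w (latticePt d A z) i) =O[cofinite] fun z ↦ ‖z‖ ^ p) {σ : Vec d}
      (hσ : σ ∈ R) : (fun z ↦ w (latticePt d A z + σ) i * (1 + ‖z‖)⁻¹) =O[cofinite]
        fun z ↦ ‖z‖ ^ (p + -1) := by
    obtain ⟨t, rfl⟩ := hRlat σ hσ
    simp only [← latticePt_add]
    exact isBigO_mul_norm_rpow (isBigO_norm_rpow_comp_add hw t) isBigO_one_add_norm_inv
  have hmul {ρ : Vec d} (hρ : ρ ∈ R) (j : Fin N) {w : (Fin d → ℤ) → ℝ} {p : ℝ}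
      (hp : p + p < -d) (hw : w =O[cofinite] fun z ↦ ‖z‖ ^ p) :
      Summable fun z ↦ D1 ρ u (latticePt d A z) j * w z :=
    summable_mul_of_summable_sq (summable_sq_D1_of_inH1 hu hρ j) <| by
      simpa only [sq] using
        summable_of_isBigO_norm_rpow hp (isBigO_mul_norm_rpow hw hw)
  rw [tsum_dotV_Hop_eq_tsum_energyDensity hRlat hHu
      (fun ρ hρ σ hσ j i ↦ hmul hρ j (by linarith) (hDv σ hσ i))
      (fun ρ hρ σ hσ j i ↦ hmul hρ j (by linarith) (hshift (hv i) hσ)),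
    tsum_dotV_Hop_eq_tsum_energyDensity hRlat hHv
      (fun ρ hρ σ hσ j i ↦ by simpa only [mul_comm] using hmul hσ i (by linarith) (hDv ρ hρ j))
      (fun ρ hρ σ hσ j i ↦ summable_of_isBigO_norm_rpow (by linarith) (isBigO_mul_norm_rpow
        (hDv ρ hρ j) (hshift (isBigO_norm_rpow_half_of_inH1 hA hRlat hRspan hu i) hσ)))]
  simp only [energyDensity_comm hCsym]

end SummationByPartsForHop

section GreenFunction

variable {d N : ℕ} {A : Matrix (Fin d) (Fin d) ℝ} {R : Finset (Vec d)}
  {C : Vec d → Vec d → Fin N → Fin N → ℝ} {G : Vec d → Fin N → Fin N → ℝ} {u : Vec d → Vec N}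

lemma sub_dotV (x y w : Vec N) : dotV (x - y) w = dotV x w - dotV y w := by
  simp only [dotV, Pi.sub_apply, sub_mul, Finset.sum_sub_distrib]

lemma dotV_sub (w x y : Vec N) : dotV w (x - y) = dotV w x - dotV w y := by
  simp only [dotV, Pi.sub_apply, mul_sub, Finset.sum_sub_distrib]

lemma Hop_D1 (ρ : Vec d) (v : Vec d → Vec N) (x : Vec d) :
    Hop d N R C (D1 ρ v) x = D1 ρ (Hop d N R C v) x := by
  ext i
  simp only [Hop, D1, mulV, Finset.sum_apply, Pi.sub_apply, ← Finset.sum_sub_distrib]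
  refine Finset.sum_congr rfl fun σ _ ↦ Finset.sum_congr rfl fun τ _ ↦
    Finset.sum_congr rfl fun j _ ↦ ?_
  rw [add_right_comm (x - σ), add_right_comm x τ, ← sub_add_eq_add_sub]
  ring

lemma sum_comp_neg (hRsym : ∀ ρ ∈ R, -ρ ∈ R) {M : Type*} [AddCommMonoid M] (f : Vec d → M) :
    ∑ ρ ∈ R, f (-ρ) = ∑ ρ ∈ R, f ρ :=
  Finset.sum_nbij' Neg.neg Neg.neg hRsym hRsym (by simp) (by simp) (by simp)

lemma Hop_comp_const_sub (hRsym : ∀ ρ ∈ R, -ρ ∈ R) (hCpt : ∀ σ ρ, C σ ρ = C (-σ) (-ρ))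
    (v : Vec d → Vec N) (p x : Vec d) :
    Hop d N R C (fun y ↦ v (p - y)) x = Hop d N R C v (p - x) := by
  have hcenter (ρ : Vec d) : D1 ρ (fun y ↦ v (p - y)) x = D1 (-ρ) v (p - x) := by
    simp only [D1]; congr 2; abel
  have hshift (σ ρ : Vec d) :
      D1 ρ (fun y ↦ v (p - y)) (x - σ) = D1 (-ρ) v (p - x - -σ) := by
    simp only [D1]; congr 2 <;> abel
  simp only [Hop, hcenter, hshift]
  rw [← sum_comp_neg hRsym]
  refine Finset.sum_congr rfl fun σ _ ↦ ?_
  rw [← sum_comp_neg hRsym]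
  exact Finset.sum_congr rfl fun ρ _ ↦ by simp only [neg_neg, ← hCpt]

lemma abs_Dmulti_col_le_DnormJmat {j : ℕ} (ρs : Fin j → {x // x ∈ R}) (k i : Fin N) (x : Vec d) :
    |Dmulti (fun m ↦ (ρs m : Vec d)) (col G k) x i| ≤ DnormJmat R j G x := by
  refine (abs_le_enorm _ i).trans <| (Real.le_sqrt_of_sq_le ?_ : _ ≤ DnormJ R j (col G k) x).trans
    (Real.le_sqrt_of_sq_le ?_)
  · exact Finset.single_le_sum (f := fun ρs : Fin j → {x // x ∈ R} ↦
      enorm (Dmulti (fun m ↦ (ρs m : Vec d)) (col G k) x) ^ 2) (fun _ _ ↦ sq_nonneg _)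
      (Finset.mem_univ ρs)
  · exact Finset.single_le_sum (f := fun k ↦ DnormJ R j (col G k) x ^ 2) (fun _ _ ↦ sq_nonneg _)
      (Finset.mem_univ k)

namespace IsLatticeGreen

lemma isBigO_Dmulti (hG : IsLatticeGreen d N A R C G) (hA : IsUnit A.det) {j : ℕ} (hj : 1 ≤ j)
    (hdj : (2 - d - j : ℝ) ≤ 0) (ρs : Fin j → {x // x ∈ R}) (k i : Fin N) :
    (fun z ↦ Dmulti (fun m ↦ (ρs m : Vec d)) (col G k) (latticePt d A z) i) =O[cofinite]
      fun z ↦ ‖z‖ ^ (2 - d - j : ℝ) := by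
  obtain ⟨c, hc⟩ := hG.2 j hj
  exact isBigO_of_le_mul_ang_latticePt_rpow hA hdj fun z ↦
    (abs_Dmulti_col_le_DnormJmat ρs k i _).trans (hc z)

lemma isBigO_D1 (hG : IsLatticeGreen d N A R C G) (hd : 0 < d) (hA : IsUnit A.det) {ρ : Vec d}
    (hρ : ρ ∈ R) (k i : Fin N) :
    (fun z ↦ D1 ρ (col G k) (latticePt d A z) i) =O[cofinite] fun z ↦ ‖z‖ ^ (1 - d : ℝ) := by
  have hd' : (1 : ℝ) ≤ d := by exact_mod_cast hd
  have hexp : (1 - d : ℝ) = 2 - d - (1 : ℕ) := by push_cast; ring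
  have h := hG.isBigO_Dmulti hA le_rfl (by linarith) ![⟨ρ, hρ⟩] k i
  simp only [Dmulti_one] at h
  rwa [hexp]

lemma isBigO_D1_D1 (hG : IsLatticeGreen d N A R C G) (hA : IsUnit A.det) {σ ρ : Vec d}
    (hσ : σ ∈ R) (hρ : ρ ∈ R) (k i : Fin N) :
    (fun z ↦ D1 σ (D1 ρ (col G k)) (latticePt d A z) i) =O[cofinite]
      fun z ↦ ‖z‖ ^ (-d : ℝ) := by
  have hexp : (-d : ℝ) = 2 - d - (2 : ℕ) := by push_cast; ring
  have h := hG.isBigO_Dmulti hA one_le_two (by norm_num) ![⟨σ, hσ⟩, ⟨ρ, hρ⟩] k i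
  simp only [Dmulti_succ, Dmulti_zero] at h
  rw [hexp]
  exact h

lemma hasSum_dotV_Hop_col (hG : IsLatticeGreen d N A R C G) (hA : IsUnit A.det) (u : Vec d → Vec N)
    (y : Fin d → ℤ) (k : Fin N) :
    HasSum (fun z ↦ dotV (Hop d N R C (col G k) (latticePt d A y - latticePt d A z))
      (u (latticePt d A z))) (u (latticePt d A y) k) := by
  have hpoint (z : Fin d → ℤ) : dotV (Hop d N R C (col G k) (latticePt d A y - latticePt d A z))
      (u (latticePt d A z)) = if z = y then u (latticePt d A y) k else 0 := by
    have hiff : latticePt d A (y - z) = 0 ↔ z = y := by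
      rw [latticePt_sub, sub_eq_zero, (latticePt_injective hA).eq_iff, eq_comm]
    simp only [← latticePt_sub, hG.1, hiff]
    split_ifs with hzy
    · simp [dotV, hzy, Pi.single_apply]
    · simp [dotV]
  simpa only [hpoint] using hasSum_ite_eq y _

end IsLatticeGreen

lemma IsLatticeGreen.hasSum_dotV_Hop_D1_col (hG : IsLatticeGreen d N A R C G) (hA : IsUnit A.det)
    (hRsym : ∀ ρ ∈ R, -ρ ∈ R) (hCpt : ∀ σ ρ, C σ ρ = C (-σ) (-ρ)) {ρ : Vec d}
    (hρ : ρ ∈ Lattice d A) (u : Vec d → Vec N) (y : Fin d → ℤ) (k : Fin N) :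
    HasSum (fun z ↦ dotV (Hop d N R C (fun x ↦ D1 ρ (col G k) (latticePt d A y - x))
      (latticePt d A z)) (u (latticePt d A z))) (D1 ρ u (latticePt d A y) k) := by
  obtain ⟨t, rfl⟩ := hρ
  have hsub := (hG.hasSum_dotV_Hop_col hA u (y + t) k).sub (hG.hasSum_dotV_Hop_col hA u y k)
  simp only [latticePt_add, add_sub_right_comm, ← sub_dotV] at hsub
  simp only [Hop_comp_const_sub hRsym hCpt (D1 _ (col G k)), Hop_D1]
  exact hsub

theorem hasSum_Hop_dotV_D1_col (hd : 0 < d) (hA : IsUnit A.det)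
    (hRlat : ∀ ρ ∈ R, ρ ∈ Lattice d A) (hRsym : ∀ ρ ∈ R, -ρ ∈ R)
    (hRspan : ∀ x ∈ Lattice d A, ∃ c : Vec d → ℤ, x = ∑ ρ ∈ R, (c ρ : ℝ) • ρ)
    (hCsym : ∀ σ ρ i j, C σ ρ i j = C ρ σ j i) (hCpt : ∀ σ ρ, C σ ρ = C (-σ) (-ρ))
    (hG : IsLatticeGreen d N A R C G) (hu : InH1 A R u) {c γ : ℝ} (hγ : 1 < γ)
    (hbound : ∀ z : Fin d → ℤ,
      enorm (Hop d N R C u (latticePt d A z)) ≤ c * ang (latticePt d A z) ^ (-γ))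
    {ρ : Vec d} (hρ : ρ ∈ R) (y : Fin d → ℤ) (k : Fin N) :
    HasSum (fun z ↦ dotV (Hop d N R C u (latticePt d A z))
      (D1 ρ (col G k) (latticePt d A y - latticePt d A z))) (D1 ρ u (latticePt d A y) k) := by
  let W (x : Vec d) : Vec N := D1 ρ (col G k) (latticePt d A y - x)
  have hW (i : Fin N) : (fun z ↦ W (latticePt d A z) i) =O[cofinite] fun z ↦ ‖z‖ ^ (1 - d : ℝ) := by
    simpa only [latticePt_sub] using
      isBigO_norm_rpow_comp_const_sub (hG.isBigO_D1 hd hA hρ k i) y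
  have hDW (σ : Vec d) (hσ : σ ∈ R) (i : Fin N) :
      (fun z ↦ D1 σ W (latticePt d A z) i) =O[cofinite] fun z ↦ ‖z‖ ^ (-d : ℝ) := by
    have hreflect (z : Fin d → ℤ) : D1 σ W (latticePt d A z) =
        D1 (-σ) (D1 ρ (col G k)) (latticePt d A (y - z)) := by
      change D1 ρ (col G k) (latticePt d A y - (latticePt d A z + σ)) - _ = _
      rw [latticePt_sub, sub_add_eq_sub_sub, sub_eq_add_neg _ σ]
      rfl
    simpa only [hreflect] using
      isBigO_norm_rpow_comp_const_sub (hG.isBigO_D1_D1 hA (hRsym σ hσ) hρ k i) y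
  have hHu (i : Fin N) :
      (fun z ↦ Hop d N R C u (latticePt d A z) i) =O[cofinite] fun z ↦ ‖z‖ ^ (-γ) :=
    isBigO_of_le_mul_ang_latticePt_rpow hA (by linarith) fun z ↦
      (abs_le_enorm _ i).trans (hbound z)
  have hsummable :
      Summable fun z ↦ dotV (Hop d N R C u (latticePt d A z)) (W (latticePt d A z)) :=
    summable_sum fun i _ ↦
      summable_of_isBigO_norm_rpow (by linarith) (isBigO_mul_norm_rpow (hHu i) (hW i))
  have hpoint : HasSum (fun z ↦ dotV (Hop d N R C W (latticePt d A z)) (u (latticePt d A z)))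
      (D1 ρ u (latticePt d A y) k) := hG.hasSum_dotV_Hop_D1_col hA hRsym hCpt (hRlat ρ hρ) u y k
  rw [← hpoint.tsum_eq, ← tsum_dotV_Hop_comm hd hA hRlat hRspan hCsym hu hW hDW hsummable
    hpoint.summable]
  exact hsummable.hasSum

lemma hasSum_dotV_Dmulti_of_hasSum_dotV_D1 (hRlat : ∀ ρ ∈ R, ρ ∈ Lattice d A)
    {f : (Fin d → ℤ) → Vec N} {v : Vec d → Vec N} {k : Fin N}
    (h : ∀ ρ ∈ R, ∀ y, HasSum (fun z ↦ dotV (f z) (D1 ρ v (latticePt d A y - latticePt d A z)))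
      (D1 ρ u (latticePt d A y) k)) {j : ℕ} (hj : 1 ≤ j) (ρs : Fin j → {x // x ∈ R})
    (y : Fin d → ℤ) :
    HasSum (fun z ↦ dotV (f z)
      (Dmulti (fun m ↦ (ρs m : Vec d)) v (latticePt d A y - latticePt d A z)))
      (Dmulti (fun m ↦ (ρs m : Vec d)) u (latticePt d A y) k) := by
  induction j, hj using Nat.le_induction generalizing y with
  | base => simpa only [Dmulti_one] using h _ (ρs 0).2 y
  | succ j _ ih =>
    obtain ⟨t, ht⟩ := hRlat _ (ρs 0).2
    have hsub := (ih (Fin.tail ρs) (y + t)).sub (ih (Fin.tail ρs) y)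
    simp only [latticePt_add, ht, add_sub_right_comm, ← dotV_sub] at hsub
    simp only [Dmulti_succ]
    exact hsub

theorem green_representation_general
    (d N : ℕ) (hd : 0 < d)
    (A : Matrix (Fin d) (Fin d) ℝ) (hA : IsUnit A.det)
    (R : Finset (Vec d)) (hRlat : ∀ ρ ∈ R, ρ ∈ Lattice d A) (hRsym : ∀ ρ ∈ R, -ρ ∈ R)
    (hRspan : ∀ x ∈ Lattice d A, ∃ c : Vec d → ℤ, x = ∑ ρ ∈ R, (c ρ : ℝ) • ρ)
    (C : Vec d → Vec d → Fin N → Fin N → ℝ)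
    (hCsym : ∀ σ ρ i j, C σ ρ i j = C ρ σ j i)
    (hCpt : ∀ σ ρ, C σ ρ = C (-σ) (-ρ))
    (G : Vec d → Fin N → Fin N → ℝ) (hG : IsLatticeGreen d N A R C G)
    (u : Vec d → Vec N) (hu : InH1 A R u) (c γ : ℝ) (hγ : 1 < γ)
    (hbound : ∀ z : Fin d → ℤ,
      enorm (Hop d N R C u (latticePt d A z)) ≤ c * ang (latticePt d A z) ^ (-γ))
    (j : ℕ) (hj : 1 ≤ j) (ρs : Fin j → {x // x ∈ R}) (zl : Fin d → ℤ) (k : Fin N) :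
    HasSum
      (fun z : Fin d → ℤ =>
        dotV (Hop d N R C u (latticePt d A z))
          (Dmulti (fun m => (ρs m : Vec d)) (col G k) (latticePt d A zl - latticePt d A z)))
      (Dmulti (fun m => (ρs m : Vec d)) u (latticePt d A zl) k) :=
  hasSum_dotV_Dmulti_of_hasSum_dotV_D1 hRlat
    (fun _ hρ y ↦ hasSum_Hop_dotV_D1_col hd hA hRlat hRsym hRspan hCsym hCpt hG hu hγ hbound
      hρ y k) hj ρs zl

end GreenFunction

/-- Lemma: Green's function representation of finite
differences. -/
theorem green_representation
    (d N : ℕ) (hd : 2 ≤ d)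
    (A : Matrix (Fin d) (Fin d) ℝ) (hA : IsUnit A.det)
    (R : Finset (Vec d)) (hR0 : (0 : Vec d) ∉ R)
    (hRlat : ∀ ρ ∈ R, ρ ∈ Lattice d A)
    (hRsym : ∀ ρ ∈ R, -ρ ∈ R)
    (hRspan : ∀ x ∈ Lattice d A, ∃ c : Vec d → ℤ, x = ∑ ρ ∈ R, (c ρ : ℝ) • ρ)
    (C : Vec d → Vec d → Fin N → Fin N → ℝ)
    (hCsym : ∀ σ ρ i j, C σ ρ i j = C ρ σ j i)
    (hCpt : ∀ σ ρ, C σ ρ = C (-σ) (-ρ))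
    (hstab : IsStable d N A R C)
    (G : Vec d → Fin N → Fin N → ℝ) (hG : IsLatticeGreen d N A R C G)
    (u : Vec d → Vec N) (hu : InH1 A R u)
    (c γ : ℝ) (hc : 0 < c) (hγ : 1 < γ)
    (hbound : ∀ z : Fin d → ℤ,
      enorm (Hop d N R C u (latticePt d A z)) ≤ c * ang (latticePt d A z) ^ (-γ)) :
    ∀ (j : ℕ), 1 ≤ j → ∀ (ρs : Fin j → {x // x ∈ R}) (zl : Fin d → ℤ) (k : Fin N),
      HasSum
        (fun z : Fin d → ℤ =>
          dotV (Hop d N R C u (latticePt d A z))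
            (Dmulti (fun m => (ρs m : Vec d)) (col G k)
              (latticePt d A zl - latticePt d A z)))
        (Dmulti (fun m => (ρs m : Vec d)) u (latticePt d A zl) k) := by
  intro j hj ρs zl k
  exact green_representation_general d N (by omega) A hA R hRlat hRsym hRspan C hCsym hCpt G hG u hu
    c γ hγ hbound j hj ρs zl k

end Defect
end
end
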